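/- For every integer n ≥ 2, every positive integer N, and every n-linear form U : (ℂ^N)^n → ℂ, one has (∑_{i₁,…,iₙ=1}^N |U(e_{i₁},…,e_{iₙ})|^{2n/(n+1)})^{(n+1)/(2n)} ≤ (2/√π) · (n-1)^{0.304975} · ‖U‖. Consequently the optimal complex multilinear Bohnenblust–Hille constant satisfies K_n ≤ (2/√π)(n-1)^{0.304975}. -/

import Mathlib

open Real

/-- The Bohnenblust--Hille quantity of an `n`-linear form on `ℓ_∞^N` over `ℂ`:
`(∑_{i₁,…,iₙ} |U(e_{i₁},…,e_{iₙ})|^{2n/(n+1)})^{(n+1)/(2n)}`. -/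
noncomputable def BHcomplex (n N : ℕ)
    (U : ContinuousMultilinearMap ℂ (fun _ : Fin n => (Fin N → ℂ)) ℂ) : ℝ :=
  (∑ i : Fin n → Fin N,
      ‖U (fun k => Pi.single (i k) (1 : ℂ))‖ ^ ((2 * n : ℝ) / (n + 1)))
    ^ ((n + 1 : ℝ) / (2 * n))

/-- The optimal complex multilinear Bohnenblust--Hille constant. -/
noncomputable def KcomplexOpt (n : ℕ) : ℝ :=
  sInf {C : ℝ | 1 ≤ C ∧ ∀ N : ℕ, 0 < N →
    ∀ U : ContinuousMultilinearMap ℂ (fun _ : Fin n => (Fin N → ℂ)) ℂ,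
      BHcomplex n N U ≤ C * ‖U‖}

/-!
Blei's mixed-norm inequality reduces the Bohnenblust-Hille inequality for `(M + 1)`-linear forms to
the one for `M`-linear forms: freezing one variable at random phases and averaging over the torus,
the constant grows at most by the factor `A` of the Khinchine inequality
`(∑ |a_j|²)^(1/2) ≤ A (E |∑ a_j z_j|^p)^(1/p)` for independent Steinhaus variables `z_j`, where
`p = 2M / (M + 1)`.

For `M = 1`, hence `p = 1`, the factor is `2 / √π`. If one coefficient carries at least half of
`∑ |a_j|²`, averaging over its phase suffices. Otherwise `E |∑ a_j z_j|` is the integral over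
`t > 0` of `(1 - ∏ J₀(|a_j| t)) / t²`, the weighted AM-GM inequality separates the coefficients,
and what remains is a comparison of `|J₀(t)|^s` with the Gaussian `exp (-s t² / 4)` for `s ≥ 2`.

For `M ≥ 2`, interpolating `L²` between `L^p` and `L³` and using `E |X|³ ≤ 73 / 54` when
`E |X|² = 1` gives the factor `(73 / 54)^(1 / M) ≤ exp (0.304975 / M)`. The product of these factors
over `2 ≤ M < n` is at most `(n - 1)^0.304975`.
-/

open MeasureTheory Set Filter Topology
open scoped NNReal ENNReal

section MixedSums

variable {ι I : Type*} [Fintype ι] [Fintype I]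

lemma sum_prod_rpow_le_prod_sum_rpow {κ : Type*} [Fintype κ] {w : κ → ℝ} (hw : ∀ k, 0 ≤ w k)
    (hw1 : ∑ k, w k = 1) (f : κ → ι → ℝ≥0) :
    ∑ x, ∏ k, f k x ^ w k ≤ ∏ k, (∑ x, f k x) ^ w k := by
  let _ : MeasurableSpace ι := ⊤
  have h := ENNReal.lintegral_prod_norm_pow_le (μ := Measure.count) Finset.univ
    (f := fun k x ↦ (f k x : ℝ≥0∞)) (fun _ _ ↦ measurable_from_top.aemeasurable) hw1
    fun k _ ↦ hw k
  simp only [lintegral_count, tsum_fintype, ← ENNReal.coe_rpow_of_nonneg _ (hw _),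
    ← ENNReal.ofNNReal_finsetSum, ← ENNReal.ofNNReal_finsetProd] at h
  exact_mod_cast h

lemma sum_rpow_mul_prod_rpow_le {κ : Type*} [Fintype κ] {w₀ : ℝ} {w : κ → ℝ} (hw₀ : 0 ≤ w₀)
    (hw : ∀ k, 0 ≤ w k) (hw1 : w₀ + ∑ k, w k = 1) (g : ι → ℝ≥0) (f : κ → ι → ℝ≥0) :
    ∑ x, g x ^ w₀ * ∏ k, f k x ^ w k ≤ (∑ x, g x) ^ w₀ * ∏ k, (∑ x, f k x) ^ w k := by
  have h := sum_prod_rpow_le_prod_sum_rpow (w := fun o : Option κ ↦ o.elim w₀ w)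
    (Option.forall.2 ⟨hw₀, hw⟩) (by simpa using hw1) fun o ↦ o.elim g f
  simpa only [Fintype.prod_option, Option.elim_none, Option.elim_some] using h

lemma sum_eq_sum_insertNth {M : ℕ} (k : Fin (M + 1)) (g : (Fin (M + 1) → I) → ℝ≥0) :
    ∑ i, g i = ∑ i', ∑ x, g (k.insertNth x i') := by
  rw [Finset.sum_comm, ← Fintype.sum_prod_type',
    ← (Fin.insertNthEquiv (fun _ ↦ I) k).sum_comp g]
  rfl

lemma sum_prod_cons_comp_succAbove_rpow_le {M : ℕ} (hM : M ≠ 0)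
    (ih : ∀ d : Fin (M + 1) → (Fin M → I) → ℝ≥0,
      ∑ i, ∏ k, d k (i ∘ k.succAbove) ^ (1 / M : ℝ) ≤ ∏ k, (∑ i', d k i') ^ (1 / M : ℝ))
    (c : Fin (M + 2) → (Fin (M + 1) → I) → ℝ≥0) (x : I) :
    ∑ i, ∏ k, c k ((Fin.cons x i : Fin (M + 2) → I) ∘ k.succAbove) ^ (1 / (M + 1) : ℝ) ≤
      (∑ i, c 0 i) ^ (1 / (M + 1) : ℝ) *
        ∏ k : Fin (M + 1), (∑ i', c k.succ (Fin.cons x i')) ^ (1 / (M + 1) : ℝ) := by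
  have hM0 : (0 : ℝ) < M := by positivity
  have hconj : (M + 1 : ℝ).HolderConjugate ((M + 1) / M) := by
    rw [Real.holderConjugate_iff]
    exact ⟨by linarith, by field_simp; ring⟩
  have hpow (s : Fin (M + 1) → ℝ≥0) :
      (∏ k, s k ^ (1 / (M + 1) : ℝ)) ^ ((M + 1) / M : ℝ) = ∏ k, s k ^ (1 / M : ℝ) := by
    rw [← NNReal.finsetProd_rpow]
    refine Finset.prod_congr rfl fun k _ ↦ ?_
    rw [← NNReal.rpow_mul]
    congr 1
    field_simp
  have hholder := NNReal.inner_le_Lp_mul_Lq Finset.univ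
    (fun i ↦ c 0 i ^ (1 / (M + 1) : ℝ))
    (fun i ↦ ∏ k : Fin (M + 1), c k.succ (Fin.cons x (i ∘ k.succAbove)) ^ (1 / (M + 1) : ℝ)) hconj
  simp only [← NNReal.rpow_mul, one_div_mul_cancel hconj.ne_zero, NNReal.rpow_one, hpow] at hholder
  simp only [Fin.prod_univ_succ (n := M + 1), Fin.cons_comp_succ, Fin.succAbove_zero,
    Fin.cons_comp_succ_succAbove]
  refine hholder.trans (mul_le_mul_right ?_ _)
  refine (NNReal.rpow_le_rpow (ih fun k i' ↦ c k.succ (Fin.cons x i')) (by positivity)).trans_eq ?_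
  rw [← hpow, ← NNReal.rpow_mul, mul_one_div_cancel (by positivity), NNReal.rpow_one]

/-- The discrete Loomis--Whitney inequality. -/
theorem sum_prod_comp_succAbove_rpow_le {M : ℕ} (hM : M ≠ 0)
    (c : Fin (M + 1) → (Fin M → I) → ℝ≥0) :
    ∑ i, ∏ k, c k (i ∘ k.succAbove) ^ (1 / M : ℝ) ≤ ∏ k, (∑ i', c k i') ^ (1 / M : ℝ) := by
  induction M, Nat.one_le_iff_ne_zero.2 hM using Nat.le_induction with
  | base =>
    have hconst (x : I) (i : Fin 1 → I) :
        (Fin.cons x i : Fin 2 → I) ∘ (Fin.succ 0).succAbove = fun _ ↦ x := by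
      funext j
      rw [Subsingleton.elim j 0]
      rfl
    have hc1 : ∑ i, c (Fin.succ 0) i = ∑ x, c (Fin.succ 0) fun _ ↦ x :=
      ((Equiv.funUnique (Fin 1) I).symm.sum_comp _).symm
    rw [sum_eq_sum_insertNth 0]
    simp only [Nat.cast_one, div_one, NNReal.rpow_one, Fin.prod_univ_succ (n := 1),
      Fin.prod_univ_one, hc1, Finset.sum_mul_sum, Fin.insertNth_zero', Fin.succAbove_zero,
      Fin.cons_comp_succ, hconst, le_refl]
  | succ M hM ih =>
    have hw (_ : Fin (M + 1)) : 0 ≤ (1 / (M + 1) : ℝ) := by positivity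
    push_cast
    calc ∑ i, ∏ k, c k (i ∘ k.succAbove) ^ (1 / (M + 1) : ℝ)
      _ ≤ ∑ x, (∑ i, c 0 i) ^ (1 / (M + 1) : ℝ) *
          ∏ k : Fin (M + 1), (∑ i', c k.succ (Fin.cons x i')) ^ (1 / (M + 1) : ℝ) := by
        rw [sum_eq_sum_insertNth 0, Finset.sum_comm]
        simp only [Fin.insertNth_zero']
        exact Finset.sum_le_sum fun x _ ↦
          sum_prod_cons_comp_succAbove_rpow_le (by lia) (ih (by lia)) c x
      _ ≤ (∑ i, c 0 i) ^ (1 / (M + 1) : ℝ) *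
          ∏ k : Fin (M + 1), (∑ x, ∑ i', c k.succ (Fin.cons x i')) ^ (1 / (M + 1) : ℝ) := by
        rw [← Finset.mul_sum]
        gcongr
        exact sum_prod_rpow_le_prod_sum_rpow hw (by simp; field_simp) _
      _ = ∏ k, (∑ i, c k i) ^ (1 / (M + 1) : ℝ) := by
        have hsum (k : Fin (M + 1)) :
            ∑ i, c k.succ i = ∑ x, ∑ i', c k.succ (Fin.cons x i') := by
          rw [sum_eq_sum_insertNth 0, Finset.sum_comm]
          simp only [Fin.insertNth_zero']
        rw [Fin.prod_univ_succ (n := M + 1)]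
        simp only [hsum]

lemma rpow_le_prod_rpow_mul_prod_rpow {M : ℕ} (hM : M ≠ 0) (a : ℝ≥0) (b : Fin (M + 1) → ℝ≥0)
    (hab : ∀ k, a ^ 2 ≤ b k) :
    a ^ (2 * (M + 1) / (M + 2) : ℝ) ≤
      (∏ k, (b k ^ (M / (M + 1) : ℝ)) ^ (1 / M : ℝ)) ^ (1 / (M + 2) : ℝ) *
        ∏ k, (a ^ 2 / b k * b k ^ (M / (M + 1) : ℝ)) ^ (1 / (M + 2) : ℝ) := by
  rcases eq_or_ne a 0 with rfl | ha
  · rw [NNReal.zero_rpow (by positivity)]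
    exact zero_le
  have hfactor (k : Fin (M + 1)) :
      (b k ^ (M / (M + 1) : ℝ)) ^ (1 / M : ℝ) * (a ^ 2 / b k * b k ^ (M / (M + 1) : ℝ)) =
        a ^ (2 : ℝ) := by
    have hb : b k ≠ 0 := ((pow_pos (pos_iff_ne_zero.2 ha) 2).trans_le (hab k)).ne'
    have hexp : (M / (M + 1) * (1 / M) + M / (M + 1) : ℝ) = 1 := by field_simp; ring
    rw [← NNReal.rpow_mul, mul_left_comm, ← NNReal.rpow_add hb, hexp, NNReal.rpow_one,
      div_mul_cancel₀ _ hb, NNReal.rpow_two]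
  rw [NNReal.finsetProd_rpow _ _ (1 / (M + 2) : ℝ), ← NNReal.mul_rpow, ← Finset.prod_mul_distrib,
    Finset.prod_congr rfl fun k _ ↦ hfactor k, Finset.prod_const, Finset.card_univ,
    Fintype.card_fin, ← NNReal.rpow_mul_natCast, ← NNReal.rpow_mul]
  refine le_of_eq (congrArg _ ?_)
  push_cast
  ring

/-- A Blei-type inequality: Hölder's inequality applied to the Loomis--Whitney product of the
`ℓ^{2M/(M+1)}(ℓ²)` mixed norms and to the `M + 1` functions `P k` that spread each of those mixed
norms over its fibres proportionally to `a²`. -/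
theorem sum_rpow_le_of_forall_sum_rpow_sum_sq_le {M : ℕ} (hM : M ≠ 0)
    (a : (Fin (M + 1) → I) → ℝ≥0) (R : ℝ≥0)
    (h : ∀ k : Fin (M + 1),
      ∑ i', (∑ j, a (k.insertNth j i') ^ 2) ^ (M / (M + 1) : ℝ) ≤ R) :
    ∑ i, a i ^ (2 * (M + 1) / (M + 2) : ℝ) ≤ R ^ ((M + 1) ^ 2 / (M * (M + 2)) : ℝ) := by
  set B : Fin (M + 1) → (Fin M → I) → ℝ≥0 := fun k i' ↦ ∑ j, a (k.insertNth j i') ^ 2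
  set c : Fin (M + 1) → (Fin M → I) → ℝ≥0 := fun k i' ↦ B k i' ^ (M / (M + 1) : ℝ)
  set P : Fin (M + 1) → (Fin (M + 1) → I) → ℝ≥0 := fun k i ↦
    a i ^ 2 / B k (i ∘ k.succAbove) * c k (i ∘ k.succAbove) with hP
  have hB (k i) : a i ^ 2 ≤ B k (i ∘ k.succAbove) := by
    have hi : k.insertNth (i k) (i ∘ k.succAbove) = i := Fin.insertNth_self_removeNth k i
    rw [← congrArg a hi]
    exact Finset.single_le_sum (f := fun j ↦ a (k.insertNth j (i ∘ k.succAbove)) ^ 2)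
      (fun _ _ ↦ zero_le) (Finset.mem_univ (i k))
  have hP_sum (k) : ∑ i, P k i ≤ R := by
    refine le_trans ?_ (h k)
    rw [sum_eq_sum_insertNth k]
    simp only [hP, Fin.insertNth_comp_succAbove, ← Finset.sum_mul, ← Finset.sum_div]
    exact Finset.sum_le_sum fun i' _ ↦ mul_le_of_le_one_left zero_le (div_self_le_one _)
  have hLW : ∑ i, ∏ k, c k (i ∘ k.succAbove) ^ (1 / M : ℝ) ≤ (R ^ (1 / M : ℝ)) ^ (M + 1) :=
    calc _ ≤ ∏ k, (∑ i', c k i') ^ (1 / M : ℝ) := sum_prod_comp_succAbove_rpow_le hM c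
      _ ≤ ∏ _k : Fin (M + 1), R ^ (1 / M : ℝ) := by gcongr with k; exact h k
      _ = (R ^ (1 / M : ℝ)) ^ (M + 1) := by simp
  calc ∑ i, a i ^ (2 * (M + 1) / (M + 2) : ℝ)
    _ ≤ ∑ i, (∏ k, c k (i ∘ k.succAbove) ^ (1 / M : ℝ)) ^ (1 / (M + 2) : ℝ) *
        ∏ k, P k i ^ (1 / (M + 2) : ℝ) :=
      Finset.sum_le_sum fun i _ ↦
        rpow_le_prod_rpow_mul_prod_rpow hM (a i) _ fun k ↦ hB k i
    _ ≤ (∑ i, ∏ k, c k (i ∘ k.succAbove) ^ (1 / M : ℝ)) ^ (1 / (M + 2) : ℝ) *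
        ∏ k, (∑ i, P k i) ^ (1 / (M + 2) : ℝ) :=
      sum_rpow_mul_prod_rpow_le (by positivity) (fun _ ↦ by positivity)
        (by simp; field_simp; ring) _ P
    _ ≤ ((R ^ (1 / M : ℝ)) ^ (M + 1)) ^ (1 / (M + 2) : ℝ) *
        ∏ _k : Fin (M + 1), R ^ (1 / (M + 2) : ℝ) := by
      gcongr with k
      exact hP_sum k
    _ = R ^ ((M + 1) ^ 2 / (M * (M + 2)) : ℝ) := by
      rw [Finset.prod_const, Finset.card_univ, Fintype.card_fin, ← NNReal.rpow_mul_natCast,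
        ← NNReal.rpow_mul_natCast, ← NNReal.rpow_mul,
        ← NNReal.rpow_add_of_nonneg _ (by positivity) (by positivity)]
      congr 1
      push_cast
      field_simp
      ring

end MixedSums

section SteinhausSums

/-- The uniform probability measure on the angles `[0, 2π]`, the law of the argument of a
Steinhaus variable. -/
noncomputable def angleMeasure : Measure ℝ :=
  ProbabilityTheory.cond volume (Ioc 0 (2 * π))

instance : IsProbabilityMeasure angleMeasure :=
  ProbabilityTheory.cond_isProbabilityMeasure_of_finite (by simp [pi_pos]) measure_Ioc_lt_top.ne

lemma integral_angleMeasure (f : ℝ → ℝ) :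
    ∫ θ, f θ ∂angleMeasure = (2 * π)⁻¹ * ∫ θ in 0..2 * π, f θ := by
  rw [angleMeasure, ProbabilityTheory.cond, integral_smul_measure,
    intervalIntegral.integral_of_le two_pi_pos.le, ENNReal.toReal_inv, Real.volume_Ioc, sub_zero,
    ENNReal.toReal_ofReal two_pi_pos.le, smul_eq_mul]

variable {ι : Type*} [Fintype ι]

/-- The law of a finite family of independent uniform angles. -/
noncomputable abbrev anglesMeasure (ι : Type*) [Fintype ι] : Measure (ι → ℝ) :=
  Measure.pi fun _ ↦ angleMeasure

/-- The Steinhaus sum `∑ aⱼ e^{iθⱼ}` as a function of the angles `θ`; under `anglesMeasure` the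
phases are independent and uniform on the circle. -/
noncomputable def steinhausSum (a : ι → ℂ) (θ : ι → ℝ) : ℂ :=
  ∑ j, a j * Circle.exp (θ j)

@[fun_prop]
lemma continuous_steinhausSum (a : ι → ℂ) : Continuous (steinhausSum a) := by
  unfold steinhausSum
  fun_prop

lemma norm_steinhausSum_le (a : ι → ℂ) (θ : ι → ℝ) : ‖steinhausSum a θ‖ ≤ ∑ j, ‖a j‖ :=
  (norm_sum_le _ _).trans_eq (by simp)

lemma integrable_comp_steinhausSum (a : ι → ℂ) {F : ℂ → ℝ} (hF : Continuous F) :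
    Integrable (fun θ ↦ F (steinhausSum a θ)) (anglesMeasure ι) := by
  obtain ⟨C, hC⟩ := (isCompact_closedBall (0 : ℂ) (∑ j, ‖a j‖)).exists_bound_of_continuousOn
    hF.continuousOn
  exact .of_bound (by fun_prop) C
    (.of_forall fun θ ↦ hC _ (mem_closedBall_zero_iff.2 (norm_steinhausSum_le a θ)))

lemma integrable_norm_steinhausSum_rpow (a : ι → ℂ) {p : ℝ} (hp : 0 ≤ p) :
    Integrable (fun θ ↦ ‖steinhausSum a θ‖ ^ p) (anglesMeasure ι) :=
  integrable_comp_steinhausSum a (F := (‖·‖ ^ p)) (by fun_prop (disch := exact hp))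

/-- `A` is an admissible constant in the Khinchine inequality `‖a‖₂ ≤ A ‖∑ aⱼ e^{iθⱼ}‖_p` for
Steinhaus variables, both sides being raised to the power `p`. -/
def SteinhausKhinchine (p A : ℝ) : Prop :=
  ∀ (N : ℕ) (a : Fin N → ℂ),
    √(∑ j, ‖a j‖ ^ 2) ^ p ≤ A ^ p * ∫ θ, ‖steinhausSum a θ‖ ^ p ∂anglesMeasure (Fin N)

end SteinhausSums

section BohnenblustHille

variable {M N : ℕ}

/-- The coefficient `U(e_{i₁},…,e_{iₙ})` of an `n`-linear form. -/
noncomputable def multilinearCoeff {n : ℕ}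
    (U : ContinuousMultilinearMap ℂ (fun _ : Fin n ↦ (Fin N → ℂ)) ℂ) (i : Fin n → Fin N) : ℂ :=
  U fun k ↦ Pi.single (i k) 1

lemma multilinearCoeff_curryMid (k : Fin (M + 1))
    (U : ContinuousMultilinearMap ℂ (fun _ : Fin (M + 1) ↦ (Fin N → ℂ)) ℂ) (s : Fin N → ℂ)
    (i : Fin M → Fin N) :
    multilinearCoeff (U.curryMid k s) i = ∑ j, multilinearCoeff U (k.insertNth j i) * s j := by
  have hsingle (j : Fin N) : k.insertNth (Pi.single j 1) (fun l ↦ Pi.single (i l) 1) =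
      fun l ↦ (Pi.single ((k.insertNth j i : Fin (M + 1) → Fin N) l) 1 : Fin N → ℂ) := by
    funext l
    cases l using Fin.succAboveCases k <;> simp
  conv_lhs => rw [pi_eq_sum_univ' s]
  simp only [multilinearCoeff, map_sum, map_smul, sum_apply,
    smul_apply, ContinuousMultilinearMap.curryMid_apply, hsingle,
    smul_eq_mul, mul_comm]

lemma norm_curryMid_apply_le (k : Fin (M + 1))
    (U : ContinuousMultilinearMap ℂ (fun _ : Fin (M + 1) ↦ (Fin N → ℂ)) ℂ) {s : Fin N → ℂ}
    (hs : ∀ j, ‖s j‖ ≤ 1) : ‖U.curryMid k s‖ ≤ ‖U‖ := by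
  refine ((U.curryMid k).le_opNorm s).trans ?_
  rw [ContinuousMultilinearMap.norm_curryMid]
  exact mul_le_of_le_one_right (norm_nonneg _) ((pi_norm_le_iff_of_nonneg zero_le_one).2 hs)

/-- `K` is an admissible constant in the Bohnenblust--Hille inequality for `n`-linear forms. -/
def BHBound (n : ℕ) (K : ℝ) : Prop :=
  ∀ (N : ℕ) (U : ContinuousMultilinearMap ℂ (fun _ : Fin n ↦ (Fin N → ℂ)) ℂ),
    BHcomplex n N U ≤ K * ‖U‖

lemma BHcomplex_le_iff {n : ℕ} (hn : n ≠ 0)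
    (U : ContinuousMultilinearMap ℂ (fun _ : Fin n ↦ (Fin N → ℂ)) ℂ) {C : ℝ} (hC : 0 ≤ C) :
    BHcomplex n N U ≤ C ↔
      ∑ i, ‖multilinearCoeff U i‖ ^ (2 * n / (n + 1) : ℝ) ≤ C ^ (2 * n / (n + 1) : ℝ) := by
  rw [← rpow_inv_le_iff_of_pos (by positivity) hC (by positivity), inv_div]
  rfl

lemma mul_circleExp_neg_arg (z : ℂ) : z * Circle.exp (-z.arg) = ‖z‖ := by
  nth_rw 1 [← Complex.norm_mul_exp_arg_mul_I z]
  rw [Circle.coe_exp, mul_assoc, ← Complex.exp_add]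
  simp

lemma BHBound_one : BHBound 1 1 := by
  intro N U
  rw [BHcomplex_le_iff one_ne_zero U (by positivity)]
  norm_num only [rpow_one, one_mul]
  let b : Fin N → ℂ := fun j ↦ multilinearCoeff U ((0 : Fin 1).insertNth j Fin.elim0)
  let s : Fin N → ℂ := fun j ↦ Circle.exp (-(b j).arg)
  have hs : multilinearCoeff (U.curryMid 0 s) Fin.elim0 = ∑ j, (‖b j‖ : ℂ) := by
    rw [multilinearCoeff_curryMid]
    exact Finset.sum_congr rfl fun j _ ↦ mul_circleExp_neg_arg (b j)
  calc ∑ i, ‖multilinearCoeff U i‖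
    _ = ∑ j, ‖b j‖ := by
      rw [← (Equiv.funUnique (Fin 1) (Fin N)).symm.sum_comp]
      refine Finset.sum_congr rfl fun j _ ↦ congrArg (‖multilinearCoeff U ·‖) ?_
      funext l
      simp [Subsingleton.elim l 0]
    _ = ‖multilinearCoeff (U.curryMid 0 s) Fin.elim0‖ := by
      rw [hs, ← Complex.ofReal_sum, Complex.norm_of_nonneg (by positivity)]
    _ ≤ ‖U.curryMid 0 s‖ :=
      ((U.curryMid 0 s).le_opNorm _).trans_eq (by simp)
    _ ≤ ‖U‖ := norm_curryMid_apply_le 0 U fun j ↦ by simp [s]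

/-- The form is frozen in its `k`-th variable at Steinhaus phases and `K` is applied to the
resulting `M`-linear form; averaging over the phases and Khinchine's inequality recover the
`ℓ²`-norm in that variable. -/
lemma sum_rpow_sum_sq_multilinearCoeff_le (hM : M ≠ 0) {A K : ℝ} (hA : 0 ≤ A) (hK : 0 ≤ K)
    (hkhinchine : SteinhausKhinchine (2 * M / (M + 1)) A) (hBH : BHBound M K)
    (U : ContinuousMultilinearMap ℂ (fun _ : Fin (M + 1) ↦ (Fin N → ℂ)) ℂ) (k : Fin (M + 1)) :
    ∑ i, √(∑ j, ‖multilinearCoeff U (k.insertNth j i)‖ ^ 2) ^ (2 * M / (M + 1) : ℝ) ≤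
      (A * K * ‖U‖) ^ (2 * M / (M + 1) : ℝ) := by
  have hp : (0 : ℝ) ≤ 2 * M / (M + 1) := by positivity
  set p : ℝ := 2 * M / (M + 1)
  let X (i : Fin M → Fin N) : (Fin N → ℝ) → ℂ :=
    steinhausSum fun j ↦ multilinearCoeff U (k.insertNth j i)
  have hX (i) : Integrable (fun θ ↦ ‖X i θ‖ ^ p) (anglesMeasure (Fin N)) :=
    integrable_norm_steinhausSum_rpow _ hp
  have hfrozen (θ : Fin N → ℝ) : ∑ i, ‖X i θ‖ ^ p ≤ (K * ‖U‖) ^ p := by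
    let V := U.curryMid k fun j ↦ Circle.exp (θ j)
    calc ∑ i, ‖X i θ‖ ^ p = ∑ i, ‖multilinearCoeff V i‖ ^ p :=
          Finset.sum_congr rfl fun i _ ↦ by rw [multilinearCoeff_curryMid]; rfl
      _ ≤ (K * ‖V‖) ^ p := (BHcomplex_le_iff hM V (by positivity)).1 (hBH N V)
      _ ≤ (K * ‖U‖) ^ p := by
        gcongr
        exact norm_curryMid_apply_le k U fun j ↦ by simp
  calc ∑ i, √(∑ j, ‖multilinearCoeff U (k.insertNth j i)‖ ^ 2) ^ p
    _ ≤ ∑ i, A ^ p * ∫ θ, ‖X i θ‖ ^ p ∂anglesMeasure (Fin N) :=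
      Finset.sum_le_sum fun i _ ↦ hkhinchine N _
    _ = A ^ p * ∫ θ, ∑ i, ‖X i θ‖ ^ p ∂anglesMeasure (Fin N) := by
      rw [← Finset.mul_sum, integral_finsetSum _ fun i _ ↦ hX i]
    _ ≤ A ^ p * ∫ _, (K * ‖U‖) ^ p ∂anglesMeasure (Fin N) := by
      refine mul_le_mul_of_nonneg_left ?_ (by positivity)
      exact integral_mono (integrable_finsetSum _ fun i _ ↦ hX i) (integrable_const _) hfrozen
    _ = (A * K * ‖U‖) ^ p := by
      rw [integral_const, probReal_univ, one_smul, mul_assoc, mul_rpow hA (by positivity)]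

theorem BHBound.succ_of_steinhausKhinchine (hM : M ≠ 0) {A K : ℝ} (hA : 0 ≤ A) (hK : 0 ≤ K)
    (hkhinchine : SteinhausKhinchine (2 * M / (M + 1)) A) (hBH : BHBound M K) :
    BHBound (M + 1) (A * K) := by
  intro N U
  rw [BHcomplex_le_iff M.succ_ne_zero U (by positivity)]
  have hsqrt (k : Fin (M + 1)) (i : Fin M → Fin N) :
      √(∑ j, ‖multilinearCoeff U (k.insertNth j i)‖ ^ 2) ^ (2 * M / (M + 1) : ℝ) =
        (∑ j, ‖multilinearCoeff U (k.insertNth j i)‖ ^ 2) ^ (M / (M + 1) : ℝ) := by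
    rw [sqrt_eq_rpow, ← rpow_mul (by positivity)]
    ring_nf
  have hblei := sum_rpow_le_of_forall_sum_rpow_sum_sq_le hM (fun i ↦ ‖multilinearCoeff U i‖₊)
    (.mk ((A * K * ‖U‖) ^ (2 * M / (M + 1) : ℝ)) (by positivity)) fun k ↦ by
      have h := sum_rpow_sum_sq_multilinearCoeff_le hM hA hK hkhinchine hBH U k
      simp only [hsqrt] at h
      rw [← NNReal.coe_le_coe]
      push_cast
      exact h
  rw [← NNReal.coe_le_coe] at hblei
  push_cast [NNReal.coe_mk] at hblei ⊢
  rw [← rpow_mul (by positivity)] at hblei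
  convert hblei using 2
  · ring_nf
  · field_simp
    ring

lemma exp_div_mul_sub_one_rpow_le {c x : ℝ} (hc : 0 ≤ c) (hx : 1 < x) :
    exp (c / x) * (x - 1) ^ c ≤ x ^ c := by
  have hx0 : 0 < x := by linarith
  have hx1 : 0 < x - 1 := by linarith
  have hlog : x⁻¹ ≤ log (x / (x - 1)) := by
    have := one_sub_inv_le_log_of_pos (div_pos hx0 hx1)
    rwa [inv_div, sub_div, div_self hx0.ne', sub_sub_cancel, one_div] at this
  calc exp (c / x) * (x - 1) ^ c
    _ ≤ exp (log (x / (x - 1)) * c) * (x - 1) ^ c := by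
      gcongr
      rw [div_eq_inv_mul]
      gcongr
    _ = x ^ c := by
      rw [← rpow_def_of_pos (div_pos hx0 hx1), ← mul_rpow (by positivity) hx1.le,
        div_mul_cancel₀ _ hx1.ne']

theorem BHBound_of_steinhausKhinchine {K c : ℝ} (hK : 0 ≤ K) (hc : 0 ≤ c)
    (h_one : SteinhausKhinchine 1 K)
    (h_two_le : ∀ M : ℕ, 2 ≤ M → SteinhausKhinchine (2 * M / (M + 1)) (exp (c / M)))
    {n : ℕ} (hn : 2 ≤ n) : BHBound n (K * (n - 1) ^ c) := by
  induction n, hn using Nat.le_induction with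
  | base =>
    have := BHBound_one.succ_of_steinhausKhinchine one_ne_zero hK zero_le_one
      (by norm_num; exact h_one)
    norm_num at this ⊢
    exact this
  | succ M hM ih =>
    have hM1 : (1 : ℝ) < M := by exact_mod_cast hM
    have : (0 : ℝ) < M - 1 := by linarith
    intro N U
    calc BHcomplex (M + 1) N U
      _ ≤ exp (c / M) * (K * (M - 1) ^ c) * ‖U‖ :=
        ih.succ_of_steinhausKhinchine (by lia) (exp_pos _).le (by positivity) (h_two_le M hM) N U
      _ = K * (exp (c / M) * (M - 1) ^ c) * ‖U‖ := by ring
      _ ≤ K * M ^ c * ‖U‖ := by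
        gcongr
        exact exp_div_mul_sub_one_rpow_le hc hM1
      _ = K * ((M + 1 : ℕ) - 1) ^ c * ‖U‖ := by simp

lemma KcomplexOpt_le_of_BHBound {n : ℕ} {K : ℝ} (hK : 1 ≤ K) (h : BHBound n K) :
    KcomplexOpt n ≤ K :=
  csInf_le ⟨1, fun _ hC ↦ hC.1⟩ ⟨hK, fun N _ ↦ h N⟩

end BohnenblustHille

section Moments

lemma integrable_angleMeasure {f : ℝ → ℝ} (hf : Continuous f) : Integrable f angleMeasure :=
  (hf.integrableOn_Ioc (a := 0) (b := 2 * π)).smul_measure (by simp [pi_pos])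

lemma integral_norm_mul_circleExp_add_sq_pow (a x : ℂ) (k : ℕ) :
    ∫ θ, (‖a * Circle.exp θ + x‖ ^ 2) ^ k ∂angleMeasure =
      ∑ j ∈ Finset.range (k + 1), k.choose j ^ 2 * (‖a‖ ^ 2) ^ j * (‖x‖ ^ 2) ^ (k - j) := by
  let p : Polynomial ℂ := ((.X + .C x) ^ k : Polynomial ℂ).comp (.C a * .X)
  have hcoeff (j : ℕ) : p.coeff j = x ^ (k - j) * k.choose j * a ^ j := by
    rw [Polynomial.comp_C_mul_X_coeff, Polynomial.coeff_X_add_C_pow]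
  calc ∫ θ, (‖a * Circle.exp θ + x‖ ^ 2) ^ k ∂angleMeasure
    _ = circleAverage (fun z ↦ ‖p.eval z‖ ^ 2) 0 1 := by
      rw [integral_angleMeasure, circleAverage, smul_eq_mul]
      simp only [p, Polynomial.eval_comp, Polynomial.eval_pow, Polynomial.eval_add,
        Polynomial.eval_mul, Polynomial.eval_X, Polynomial.eval_C, norm_pow, circleMap_zero,
        Complex.ofReal_one, one_mul, Circle.coe_exp, pow_right_comm]
    _ = ∑ j ∈ Finset.range (k + 1), ‖p.coeff j‖ ^ 2 := by
      rw [← Polynomial.sum_sq_norm_coeff_eq_circleAverage]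
      refine Finset.sum_subset (fun j hj ↦ ?_) fun j _ hj ↦ ?_
      · by_contra h
        rw [Finset.mem_range, not_lt] at h
        simp [hcoeff, Nat.choose_eq_zero_of_lt h] at hj
      · rw [Polynomial.notMem_support_iff.1 hj, norm_zero, zero_pow two_ne_zero]
    _ = _ := Finset.sum_congr rfl fun j _ ↦ by
      rw [hcoeff, norm_mul, norm_mul, norm_pow, norm_pow, Complex.norm_natCast]
      ring

section Splitting

variable {N : ℕ} (j : Fin (N + 1)) (a : Fin (N + 1) → ℂ) {F : ℂ → ℝ}

lemma steinhausSum_eq_add_steinhausSum_succAbove (θ : Fin (N + 1) → ℝ) :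
    steinhausSum a θ = a j * Circle.exp (θ j) + steinhausSum (a ∘ j.succAbove) (j.removeNth θ) := by
  simp only [steinhausSum, Fin.sum_univ_succAbove _ j]
  rfl

lemma integrable_comp_add_steinhausSum_succAbove (hF : Continuous F) :
    Integrable (fun q : ℝ × (Fin N → ℝ) ↦
      F (a j * Circle.exp q.1 + steinhausSum (a ∘ j.succAbove) q.2))
      (angleMeasure.prod (anglesMeasure (Fin N))) := by
  have hmp := measurePreserving_piFinSuccAbove (fun _ : Fin (N + 1) ↦ angleMeasure) j
  rw [← hmp.integrable_comp_emb (MeasurableEquiv.measurableEmbedding _)]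
  refine (integrable_comp_steinhausSum a hF).congr (.of_forall fun θ ↦ ?_)
  simp only [steinhausSum_eq_add_steinhausSum_succAbove j a]
  rfl

lemma integral_comp_steinhausSum_succAbove (hF : Continuous F) :
    ∫ θ, F (steinhausSum a θ) ∂anglesMeasure (Fin (N + 1)) =
      ∫ t, ∫ θ, F (a j * Circle.exp θ + steinhausSum (a ∘ j.succAbove) t) ∂angleMeasure
        ∂anglesMeasure (Fin N) := by
  simp only [steinhausSum_eq_add_steinhausSum_succAbove j a]
  exact ((measurePreserving_piFinSuccAbove (fun _ : Fin (N + 1) ↦ angleMeasure) j).integral_comp'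
    fun q ↦ F (a j * Circle.exp q.1 + steinhausSum (a ∘ j.succAbove) q.2)).trans
    (integral_prod_symm _ (integrable_comp_add_steinhausSum_succAbove j a hF))

end Splitting

/-- The absolute moment of order `2k` of a Steinhaus sum. -/
noncomputable def steinhausMoment {ι : Type*} [Fintype ι] (a : ι → ℂ) (k : ℕ) : ℝ :=
  ∫ θ, (‖steinhausSum a θ‖ ^ 2) ^ k ∂anglesMeasure ι

lemma steinhausMoment_zero {ι : Type*} [Fintype ι] (a : ι → ℂ) : steinhausMoment a 0 = 1 := by
  simp [steinhausMoment]

lemma integral_sum_mul_norm_steinhausSum_sq_pow {ι κ : Type*} [Fintype ι] (a : ι → ℂ)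
    (s : Finset κ) (c : κ → ℝ) (k : κ → ℕ) :
    ∫ θ, ∑ i ∈ s, c i * (‖steinhausSum a θ‖ ^ 2) ^ k i ∂anglesMeasure ι =
      ∑ i ∈ s, c i * steinhausMoment a (k i) := by
  have hintegrable (i : κ) :
      Integrable (fun θ ↦ c i * (‖steinhausSum a θ‖ ^ 2) ^ k i) (anglesMeasure ι) :=
    integrable_comp_steinhausSum a (F := fun z ↦ c i * (‖z‖ ^ 2) ^ k i) (by fun_prop)
  rw [integral_finsetSum _ fun i _ ↦ hintegrable i]
  simp only [integral_const_mul, steinhausMoment]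

lemma steinhausMoment_succ {N : ℕ} (a : Fin (N + 1) → ℂ) (k : ℕ) :
    steinhausMoment a k = ∑ j ∈ Finset.range (k + 1),
      k.choose j ^ 2 * (‖a 0‖ ^ 2) ^ j * steinhausMoment (a ∘ Fin.succ) (k - j) := by
  rw [steinhausMoment, integral_comp_steinhausSum_succAbove 0 a (F := fun z ↦ (‖z‖ ^ 2) ^ k)
    (by fun_prop)]
  simp only [integral_norm_mul_circleExp_add_sq_pow]
  exact integral_sum_mul_norm_steinhausSum_sq_pow _ _ _ _

lemma steinhausMoment_one {N : ℕ} (a : Fin N → ℂ) : steinhausMoment a 1 = ∑ j, ‖a j‖ ^ 2 := by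
  induction N with
  | zero => simp [steinhausMoment, steinhausSum]
  | succ N ih =>
    rw [steinhausMoment_succ, Fin.sum_univ_succ]
    simp [Finset.sum_range_succ, ih, steinhausMoment_zero, add_comm]

/-- The moments are dominated by those of the complex Gaussian of the same variance. -/
lemma steinhausMoment_le {N : ℕ} (a : Fin N → ℂ) (k : ℕ) :
    steinhausMoment a k ≤ k.factorial * (∑ j, ‖a j‖ ^ 2) ^ k := by
  induction N generalizing k with
  | zero =>
    rcases eq_or_ne k 0 with rfl | hk
    · simp [steinhausMoment_zero]
    · simp [steinhausMoment, steinhausSum, hk]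
  | succ N ih =>
    rw [steinhausMoment_succ, Fin.sum_univ_succ, add_pow, Finset.mul_sum]
    refine Finset.sum_le_sum fun j hj ↦ ?_
    have hjk : j ≤ k := Finset.mem_range_succ_iff.1 hj
    have hfactorial : (k.choose j * (k - j).factorial : ℝ) ≤ k.factorial := by
      rw [← Nat.choose_mul_factorial_mul_factorial hjk]
      exact_mod_cast Nat.mul_le_mul_right _ (Nat.le_mul_of_pos_right _ j.factorial_pos)
    calc k.choose j ^ 2 * (‖a 0‖ ^ 2) ^ j * steinhausMoment (a ∘ Fin.succ) (k - j)
      _ ≤ k.choose j ^ 2 * (‖a 0‖ ^ 2) ^ j *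
          ((k - j).factorial * (∑ i : Fin N, ‖a i.succ‖ ^ 2) ^ (k - j)) := by
        gcongr
        exact ih (a ∘ Fin.succ) (k - j)
      _ = (k.choose j * (k - j).factorial) *
          ((‖a 0‖ ^ 2) ^ j * (∑ i : Fin N, ‖a i.succ‖ ^ 2) ^ (k - j) * k.choose j) := by ring
      _ ≤ _ := by gcongr

lemma steinhausMoment_four_sub_three_add_two_le {N : ℕ} (a : Fin N → ℂ) :
    steinhausMoment a 4 - 12 * (∑ j, ‖a j‖ ^ 2) * steinhausMoment a 3 +
      75 * (∑ j, ‖a j‖ ^ 2) ^ 2 * steinhausMoment a 2 ≤ 102 * (∑ j, ‖a j‖ ^ 2) ^ 4 := by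
  induction N with
  | zero => simp [steinhausMoment, steinhausSum]
  | succ N ih =>
    have h₂ := steinhausMoment_le (a ∘ Fin.succ) 2
    have h₃ := steinhausMoment_le (a ∘ Fin.succ) 3
    have h₄ := ih (a ∘ Fin.succ)
    have hT : 0 ≤ ∑ j : Fin N, ‖a j.succ‖ ^ 2 := by positivity
    have hv : 0 ≤ ‖a 0‖ ^ 2 := by positivity
    simp only [steinhausMoment_succ a, Fin.sum_univ_succ, Finset.sum_range_succ,
      Finset.sum_range_zero, steinhausMoment_zero, steinhausMoment_one, Function.comp_apply,
      Nat.factorial, Nat.choose, Nat.reduceSub] at h₂ h₃ h₄ ⊢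
    push_cast at h₂ h₃ h₄ ⊢
    generalize ∑ j : Fin N, ‖a j.succ‖ ^ 2 = T at *
    generalize ‖a 0‖ ^ 2 = v at *
    have hrest : 0 ≤ 39 * T ^ 2 * v ^ 2 + 62 * T * v ^ 3 + 38 * v ^ 4 := by positivity
    linear_combination h₄ + 4 * v * h₃ + (3 * v ^ 2 + 42 * T * v) * h₂ + hrest

lemma pow_three_le_even_polynomial {x : ℝ} (hx : 0 ≤ x) :
    x ^ 3 ≤ 1 / 108 * (x ^ 2) ^ 4 + -12 / 108 * (x ^ 2) ^ 3 + 75 / 108 * (x ^ 2) ^ 2 +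
      44 / 108 * (x ^ 2) ^ 1 := by
  have : 0 ≤ x ^ 2 * ((x - 1) ^ 2 * (x - 2) ^ 2 * (x ^ 2 + 6 * x + 11)) := by positivity
  linear_combination (1 / 108) * this

lemma integral_norm_steinhausSum_pow_three_le {N : ℕ} {a : Fin N → ℂ}
    (ha : ∑ j, ‖a j‖ ^ 2 = 1) :
    ∫ θ, ‖steinhausSum a θ‖ ^ 3 ∂anglesMeasure (Fin N) ≤ 73 / 54 := by
  have hpoly := integral_sum_mul_norm_steinhausSum_sq_pow a Finset.univ
    ![1 / 108, -12 / 108, 75 / 108, 44 / 108] ![4, 3, 2, 1]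
  simp only [Fin.sum_univ_four, Matrix.cons_val] at hpoly
  have h_four := steinhausMoment_four_sub_three_add_two_le a
  rw [ha] at h_four
  calc ∫ θ, ‖steinhausSum a θ‖ ^ 3 ∂anglesMeasure (Fin N)
    _ ≤ ∫ θ, (1 / 108 * (‖steinhausSum a θ‖ ^ 2) ^ 4 + -12 / 108 * (‖steinhausSum a θ‖ ^ 2) ^ 3 +
          75 / 108 * (‖steinhausSum a θ‖ ^ 2) ^ 2 + 44 / 108 * (‖steinhausSum a θ‖ ^ 2) ^ 1)
          ∂anglesMeasure (Fin N) := by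
      refine integral_mono (integrable_comp_steinhausSum a (F := (‖·‖ ^ 3)) (by fun_prop))
        (integrable_comp_steinhausSum a (F := fun z ↦ 1 / 108 * (‖z‖ ^ 2) ^ 4 +
          -12 / 108 * (‖z‖ ^ 2) ^ 3 + 75 / 108 * (‖z‖ ^ 2) ^ 2 + 44 / 108 * (‖z‖ ^ 2) ^ 1)
          (by fun_prop)) fun θ ↦ pow_three_le_even_polynomial (norm_nonneg _)
    _ ≤ 73 / 54 := by
      rw [hpoly, steinhausMoment_one, ha]
      linarith

end Moments

section InterpolatedKhinchine

variable {p A : ℝ}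

lemma steinhausSum_smul {ι : Type*} [Fintype ι] (c : ℂ) (a : ι → ℂ) (θ : ι → ℝ) :
    steinhausSum (c • a) θ = c * steinhausSum a θ := by
  simp only [steinhausSum, Pi.smul_apply, smul_eq_mul, Finset.mul_sum, mul_assoc]

lemma SteinhausKhinchine.mono {B : ℝ} (hp : 0 ≤ p) (hA : 0 ≤ A) (hAB : A ≤ B)
    (h : SteinhausKhinchine p A) : SteinhausKhinchine p B := fun N a ↦
  (h N a).trans <| mul_le_mul_of_nonneg_right (rpow_le_rpow hA hAB hp) (by positivity)

lemma SteinhausKhinchine.of_sum_sq_eq_one (hp : 0 < p) (hA : 0 ≤ A)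
    (h : ∀ (N : ℕ) (a : Fin N → ℂ), ∑ j, ‖a j‖ ^ 2 = 1 →
      1 ≤ A ^ p * ∫ θ, ‖steinhausSum a θ‖ ^ p ∂anglesMeasure (Fin N)) :
    SteinhausKhinchine p A := by
  intro N a
  obtain ⟨c, hc⟩ : ∃ c, c = √(∑ j, ‖a j‖ ^ 2) := ⟨_, rfl⟩
  have hsq : c ^ 2 = ∑ j, ‖a j‖ ^ 2 := by rw [hc, sq_sqrt (by positivity)]
  rw [← hc]
  rcases (hc ▸ sqrt_nonneg _ : 0 ≤ c).eq_or_lt' with hc0 | hc0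
  · rw [hc0, zero_rpow hp.ne']
    positivity
  obtain ⟨b, rfl⟩ : ∃ b : Fin N → ℂ, a = (c : ℂ) • b :=
    ⟨(c : ℂ)⁻¹ • a, (smul_inv_smul₀ (by exact_mod_cast hc0.ne') a).symm⟩
  have hb : ∑ j, ‖b j‖ ^ 2 = 1 := by
    simp only [Pi.smul_apply, norm_smul, Complex.norm_of_nonneg hc0.le, mul_pow,
      ← Finset.mul_sum] at hsq
    exact (mul_eq_left₀ (by positivity)).1 hsq.symm
  calc c ^ p
    _ ≤ c ^ p * (A ^ p * ∫ θ, ‖steinhausSum b θ‖ ^ p ∂anglesMeasure (Fin N)) :=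
      le_mul_of_one_le_right (by positivity) (h N b hb)
    _ = A ^ p * ∫ θ, ‖steinhausSum ((c : ℂ) • b) θ‖ ^ p ∂anglesMeasure (Fin N) := by
      simp only [steinhausSum_smul, norm_mul, Complex.norm_of_nonneg hc0.le,
        mul_rpow hc0.le (norm_nonneg _), integral_const_mul]
      ring

/-- Young's inequality for the interpolation of `L²` between `L^p` and `L³`. -/
lemma sq_le_rpow_add_pow_three {B x : ℝ} (hB : 0 < B) (hx : 0 ≤ x) (hp : 0 < p) (hp2 : p < 2) :
    x ^ 2 ≤ (3 - p)⁻¹ * (B ^ (2 - p) * x ^ p) + (2 - p) / (3 - p) * (x ^ 3 / B) := by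
  have : 0 < 2 - p := by linarith
  have h3p : 0 < 3 - p := by linarith
  calc x ^ 2
    _ = (B ^ (2 - p) * x ^ p) ^ (3 - p)⁻¹ * (x ^ 3 / B) ^ ((2 - p) / (3 - p)) := by
      rcases hx.eq_or_lt' with rfl | hx0
      · rw [zero_rpow hp.ne', mul_zero, zero_rpow (by positivity)]
        simp
      have hexp : ((2 : ℕ) : ℝ) = p * (3 - p)⁻¹ + (3 : ℕ) * ((2 - p) / (3 - p)) := by
        push_cast
        field_simp
        ring
      rw [mul_rpow (by positivity) (by positivity), div_rpow (by positivity) hB.le,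
        ← rpow_natCast x 3, ← rpow_natCast x 2, ← rpow_mul hB.le, ← rpow_mul hx, ← rpow_mul hx,
        ← div_eq_mul_inv, hexp, rpow_add hx0]
      field_simp
    _ ≤ _ := geom_mean_le_arith_mean2_weighted (by positivity) (by positivity) (by positivity)
      (by positivity) (by field_simp; ring)

theorem steinhausKhinchine_of_lt_two (hp : 0 < p) (hp2 : p < 2) :
    SteinhausKhinchine p ((73 / 54) ^ ((2 - p) / p)) := by
  refine .of_sum_sq_eq_one hp (by positivity) fun N a ha ↦ ?_
  rw [← rpow_mul (by norm_num), div_mul_cancel₀ _ hp.ne']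
  have h3p : 0 < 3 - p := by linarith
  have hp_int := integrable_norm_steinhausSum_rpow a hp.le
  have h_three_int := integrable_comp_steinhausSum a (F := (‖·‖ ^ 3)) (by fun_prop)
  have h_two : ∫ θ, ‖steinhausSum a θ‖ ^ 2 ∂anglesMeasure (Fin N) = 1 := by
    simpa only [steinhausMoment, pow_one, ha] using steinhausMoment_one a
  set B : ℝ := 73 / 54
  have h_interp : 1 ≤ (3 - p)⁻¹ * (B ^ (2 - p) * ∫ θ, ‖steinhausSum a θ‖ ^ p ∂anglesMeasure (Fin N))
      + (2 - p) / (3 - p) * ((∫ θ, ‖steinhausSum a θ‖ ^ 3 ∂anglesMeasure (Fin N)) / B) := by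
    rw [← h_two, ← integral_const_mul, ← integral_const_mul, ← integral_div, ← integral_const_mul,
      ← integral_add ((hp_int.const_mul _).const_mul _) ((h_three_int.div_const _).const_mul _)]
    exact integral_mono (integrable_comp_steinhausSum a (F := (‖·‖ ^ 2)) (by fun_prop))
      (((hp_int.const_mul _).const_mul _).add ((h_three_int.div_const _).const_mul _))
      fun θ ↦ sq_le_rpow_add_pow_three (by positivity) (norm_nonneg _) hp hp2
  have h_three : (∫ θ, ‖steinhausSum a θ‖ ^ 3 ∂anglesMeasure (Fin N)) / B ≤ 1 :=
    (div_le_one (by positivity)).2 (integral_norm_steinhausSum_pow_three_le ha)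
  have h2p : 0 ≤ (2 - p) / (3 - p) := div_nonneg (by linarith) h3p.le
  have h_rest := mul_le_mul_of_nonneg_left h_three h2p
  have h_sum : (3 - p)⁻¹ * 1 + (2 - p) / (3 - p) * 1 = 1 := by field_simp; ring
  exact le_of_mul_le_mul_left (by linarith) (inv_pos.2 h3p)

lemma steinhausKhinchine_two_mul_div_add_one {c : ℝ} (hc : log (73 / 54) ≤ c) {M : ℕ} (hM : M ≠ 0) :
    SteinhausKhinchine (2 * M / (M + 1)) (exp (c / M)) := by
  have : (0 : ℝ) < M := by positivity
  have hp2 : (2 * M / (M + 1) : ℝ) < 2 := by rw [div_lt_iff₀ (by positivity)]; linarith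
  have hexp : (2 - 2 * M / (M + 1) : ℝ) / (2 * M / (M + 1)) = 1 / M := by field_simp; ring
  refine (steinhausKhinchine_of_lt_two (by positivity) hp2).mono (by positivity) (by positivity) ?_
  rw [hexp, rpow_def_of_pos (by norm_num), mul_one_div]
  gcongr

end InterpolatedKhinchine

section DominantCoefficient

lemma re_mul_circleExp (z : ℂ) (t : ℝ) : (z * Circle.exp t).re = ‖z‖ * cos (z.arg + t) := by
  conv_lhs => rw [← Complex.norm_mul_exp_arg_mul_I z, Circle.coe_exp, mul_assoc, ← Complex.exp_add,
    ← add_mul, ← Complex.ofReal_add, Complex.re_ofReal_mul, Complex.exp_ofReal_mul_I_re]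

lemma integral_comp_re_mul_circleExp (g : ℝ → ℝ) (z : ℂ) :
    ∫ θ, g (z * Circle.exp θ).re ∂angleMeasure = ∫ θ, g (‖z‖ * cos θ) ∂angleMeasure := by
  have hperiodic : Function.Periodic (fun θ ↦ g (‖z‖ * cos θ)) (2 * π) := fun θ ↦ by simp
  simp only [integral_angleMeasure, re_mul_circleExp]
  rw [intervalIntegral.integral_comp_add_left (fun θ ↦ g (‖z‖ * cos θ)), add_zero,
    hperiodic.intervalIntegral_add_eq z.arg 0, zero_add]

lemma integral_comp_neg_cos (g : ℝ → ℝ) :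
    ∫ θ, g (-cos θ) ∂angleMeasure = ∫ θ, g (cos θ) ∂angleMeasure := by
  simpa [Circle.coe_exp, Complex.exp_ofReal_mul_I_re] using integral_comp_re_mul_circleExp g (-1)

lemma norm_mul_circleExp_add_sq (a x : ℂ) (θ : ℝ) :
    ‖a * Circle.exp θ + x‖ ^ 2 =
      ‖x‖ ^ 2 + ‖a‖ ^ 2 + 2 * (a * (starRingEnd ℂ) x * Circle.exp θ).re := by
  rw [← Complex.normSq_eq_norm_sq, Complex.normSq_add, Complex.normSq_eq_norm_sq,
    Complex.normSq_eq_norm_sq, norm_mul, Circle.norm_coe, mul_one, mul_right_comm]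
  ring

lemma integral_norm_mul_circleExp_add (a x : ℂ) :
    ∫ θ, ‖a * Circle.exp θ + x‖ ∂angleMeasure =
      ∫ θ, √(‖x‖ ^ 2 + ‖a‖ ^ 2 + 2 * (‖a‖ * ‖x‖ * cos θ)) ∂angleMeasure := by
  have h := integral_comp_re_mul_circleExp (fun w ↦ √(‖x‖ ^ 2 + ‖a‖ ^ 2 + 2 * w))
    (a * (starRingEnd ℂ) x)
  simpa only [← norm_mul_circleExp_add_sq, sqrt_sq (norm_nonneg _), norm_mul, RCLike.norm_conj]
    using h

lemma integral_sqrt_one_sub_cos : ∫ θ, √(1 - cos θ) ∂angleMeasure = 2 * √2 / π := by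
  have hhalf : EqOn (fun θ ↦ √(1 - cos θ)) (fun θ ↦ √2 * sin (θ / 2)) (uIcc 0 (2 * π)) := by
    intro θ hθ
    rw [uIcc_of_le two_pi_pos.le] at hθ
    have hsin : 0 ≤ sin (θ / 2) :=
      sin_nonneg_of_nonneg_of_le_pi (by linarith [hθ.1]) (by linarith [hθ.2])
    have hcos : 1 - cos θ = 2 * sin (θ / 2) ^ 2 := by
      rw [sin_sq_eq_half_sub, mul_div_cancel₀ θ two_ne_zero]
      ring
    simp only [hcos, sqrt_mul zero_le_two, sqrt_sq hsin]
  rw [integral_angleMeasure, intervalIntegral.integral_congr hhalf,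
    intervalIntegral.integral_const_mul, intervalIntegral.integral_comp_div sin two_ne_zero,
    integral_sin]
  simp
  field_simp
  norm_num

lemma sqrt_one_add_add_sqrt_one_sub {x : ℝ} (hx : x ^ 2 ≤ 1) :
    (√(1 + x) + √(1 - x)) / 2 = √((1 + √(1 - x ^ 2)) / 2) := by
  obtain ⟨hx₁, hx₂⟩ := abs_le.1 (sq_le_one_iff_abs_le_one x |>.1 hx)
  have hprod : √(1 - x ^ 2) = √(1 + x) * √(1 - x) := by
    rw [← sqrt_mul (by linarith)]
    ring_nf
  rw [eq_comm, sqrt_eq_iff_mul_self_eq (by positivity) (by positivity), hprod]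
  linear_combination (-1 / 4) * mul_self_sqrt (show 0 ≤ 1 + x by linarith) -
    (1 / 4) * mul_self_sqrt (show 0 ≤ 1 - x by linarith)

lemma one_sub_add_mul_le_sqrt {l s y : ℝ} (hl : 0 ≤ l) (hl1 : l ≤ 1)
    (h : 1 - l + l * s ^ 2 ≤ y) : 1 - l + l * s ≤ √y := by
  apply le_sqrt_of_sq_le
  nlinarith [mul_nonneg (mul_nonneg hl (sub_nonneg.2 hl1)) (sq_nonneg (s - 1))]

/-- Concavity of `v ↦ √(1 + √v) + √(1 - √v)` between `v = 0` and `v = x²`. -/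
lemma one_sub_sq_add_le_sqrt_one_add_add_sqrt_one_sub {r x : ℝ} (hr : r ^ 2 ≤ 1) (hx : x ^ 2 ≤ 1) :
    1 - r ^ 2 + r ^ 2 * ((√(1 + x) + √(1 - x)) / 2) ≤
      (√(1 + r * x) + √(1 - r * x)) / 2 := by
  have hrx : (r * x) ^ 2 ≤ 1 := by rw [mul_pow]; exact mul_le_one₀ hr (sq_nonneg x) hx
  rw [sqrt_one_add_add_sqrt_one_sub hx, sqrt_one_add_add_sqrt_one_sub hrx]
  apply one_sub_add_mul_le_sqrt (sq_nonneg r) hr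
  have hinner : 1 - r ^ 2 + r ^ 2 * √(1 - x ^ 2) ≤ √(1 - (r * x) ^ 2) := by
    refine one_sub_add_mul_le_sqrt (sq_nonneg r) hr (le_of_eq ?_)
    rw [sq_sqrt (by linarith)]
    ring
  rw [sq_sqrt (by positivity)]
  linarith

lemma integral_sqrt_one_add_mul_cos (r : ℝ) :
    ∫ θ, √(1 + r * cos θ) ∂angleMeasure =
      ∫ θ, (√(1 + r * cos θ) + √(1 - r * cos θ)) / 2 ∂angleMeasure := by
  have hneg : ∫ θ, √(1 - r * cos θ) ∂angleMeasure = ∫ θ, √(1 + r * cos θ) ∂angleMeasure := by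
    simpa only [mul_neg, ← sub_eq_add_neg] using integral_comp_neg_cos fun w ↦ √(1 + r * w)
  rw [integral_div, integral_add (integrable_angleMeasure (by fun_prop))
    (integrable_angleMeasure (by fun_prop)), hneg]
  ring

lemma le_integral_sqrt_one_add_mul_cos {r : ℝ} (hr : r ^ 2 ≤ 1) :
    1 - r ^ 2 + r ^ 2 * (2 * √2 / π) ≤ ∫ θ, √(1 + r * cos θ) ∂angleMeasure := by
  have hone : 2 * √2 / π =
      ∫ θ, (√(1 + cos θ) + √(1 - cos θ)) / 2 ∂angleMeasure := by
    rw [← integral_sqrt_one_sub_cos]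
    have := integral_sqrt_one_add_mul_cos 1
    have := integral_comp_neg_cos fun w ↦ √(1 + w)
    simp_all [← sub_eq_add_neg]
  calc 1 - r ^ 2 + r ^ 2 * (2 * √2 / π)
    _ = ∫ θ, (1 - r ^ 2 + r ^ 2 * ((√(1 + cos θ) + √(1 - cos θ)) / 2)) ∂angleMeasure := by
      rw [integral_add (integrable_const _) (integrable_angleMeasure (by fun_prop)),
        integral_const_mul, hone]
      simp
    _ ≤ ∫ θ, (√(1 + r * cos θ) + √(1 - r * cos θ)) / 2 ∂angleMeasure :=
      integral_mono (integrable_angleMeasure (by fun_prop)) (integrable_angleMeasure (by fun_prop))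
        fun θ ↦ one_sub_sq_add_le_sqrt_one_add_add_sqrt_one_sub hr (cos_sq_le_one θ)
    _ = _ := (integral_sqrt_one_add_mul_cos r).symm

lemma quartic_le_self_sub_div_pow_three {w : ℝ} (hw : 1 ≤ w) :
    0.945 + 0.338 * (w ^ 2 - 1) - 0.013 * (w ^ 2 - 1) ^ 2 ≤
      w - 0.3988 * (w ^ 2 - 1) / w ^ 3 := by
  have hw3 : 0 < w ^ 3 := by positivity
  rw [le_sub_iff_add_le, ← le_sub_iff_add_le', div_le_iff₀ hw3]
  obtain ⟨t, ht, rfl⟩ : ∃ t : ℝ, 0 ≤ t ∧ w = 1 + t := ⟨w - 1, by linarith, by ring⟩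
  have hdouble : 0 ≤ (t - 0.345) ^ 2 * (t - 1.371) ^ 2 *
      (0.013 * t ^ 3 + 0.1356 * t ^ 2 + 0.3238 * t + 0.2399) := by positivity
  nlinarith [pow_nonneg ht 2, pow_nonneg ht 3, pow_nonneg ht 4, pow_nonneg ht 5, pow_nonneg ht 6]

lemma le_integral_norm_mul_circleExp_add {a : ℂ} (ha : ‖a‖ = 1) (x : ℂ) :
    0.945 + 0.338 * ‖x‖ ^ 2 - 0.013 * (‖x‖ ^ 2) ^ 2 ≤
      ∫ θ, ‖a * Circle.exp θ + x‖ ∂angleMeasure := by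
  rw [integral_norm_mul_circleExp_add, ha]
  generalize ‖x‖ = y
  obtain ⟨w, hw, hwy⟩ : ∃ w, 1 ≤ w ∧ w ^ 2 = y ^ 2 + 1 :=
    ⟨√(y ^ 2 + 1), one_le_sqrt.2 (by nlinarith), sq_sqrt (by positivity)⟩
  have hw0 : 0 < w := by linarith
  have hr : (2 * y / w ^ 2) ^ 2 ≤ 1 := by
    rw [div_pow, div_le_one (by positivity), hwy]
    nlinarith [sq_nonneg (y ^ 2 - 1)]
  have hsqrt (θ : ℝ) :
      √(y ^ 2 + 1 ^ 2 + 2 * (1 * y * cos θ)) = w * √(1 + 2 * y / w ^ 2 * cos θ) := by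
    conv_rhs => rw [← sqrt_sq hw0.le, ← sqrt_mul (sq_nonneg w), sqrt_sq hw0.le]
    congr 1
    field_simp
    linear_combination -hwy
  have hconst : (0.9003 : ℝ) ≤ 2 * √2 / π := by
    have hsqrt_two : (1.41421 : ℝ) ≤ √2 := le_sqrt_of_sq_le (by norm_num)
    rw [le_div_iff₀ pi_pos]
    linarith [pi_lt_d4]
  calc 0.945 + 0.338 * y ^ 2 - 0.013 * (y ^ 2) ^ 2
    _ ≤ w - 0.3988 * y ^ 2 / w ^ 3 := by
      simpa only [hwy, add_sub_cancel_right] using quartic_le_self_sub_div_pow_three hw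
    _ = w * (1 - 0.0997 * (2 * y / w ^ 2) ^ 2) := by field_simp; ring
    _ ≤ w * ∫ θ, √(1 + 2 * y / w ^ 2 * cos θ) ∂angleMeasure := by
      gcongr
      refine le_trans ?_ (le_integral_sqrt_one_add_mul_cos hr)
      nlinarith [sq_nonneg (2 * y / w ^ 2)]
    _ = _ := by simp only [hsqrt, integral_const_mul]

lemma sqrt_pi_div_two_mul_sqrt_one_add_le {τ : ℝ} (h0 : 0 ≤ τ) (h1 : τ ≤ 1) :
    √π / 2 * √(1 + τ) ≤ 0.945 + 0.338 * τ - 0.013 * (2 * τ ^ 2) := by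
  have hπ := pi_lt_d4
  have hrhs : 0 ≤ 0.945 + 0.338 * τ - 0.013 * (2 * τ ^ 2) := by nlinarith
  refine le_of_sq_le_sq ?_ hrhs
  rw [mul_pow, div_pow, sq_sqrt pi_pos.le, sq_sqrt (by positivity)]
  nlinarith [mul_nonneg h0 (sub_nonneg.2 h1), mul_nonneg (mul_nonneg h0 h0) (sub_nonneg.2 h1),
    pow_nonneg h0 3, sq_nonneg (τ ^ 2), sq_nonneg (τ - 0.7)]

lemma le_integral_norm_steinhausSum_of_norm_eq_one {N : ℕ} (j : Fin (N + 1)) {a : Fin (N + 1) → ℂ}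
    (ha : ‖a j‖ = 1) (hrest : ∑ k, ‖a (j.succAbove k)‖ ^ 2 ≤ 1) :
    √π / 2 * √(∑ k, ‖a k‖ ^ 2) ≤ ∫ θ, ‖steinhausSum a θ‖ ∂anglesMeasure (Fin (N + 1)) := by
  let b : Fin N → ℂ := a ∘ j.succAbove
  have h_one := steinhausMoment_one b
  have h_two := steinhausMoment_le b 2
  have hpoly := integral_sum_mul_norm_steinhausSum_sq_pow b Finset.univ ![0.945, 0.338, -0.013]
    ![0, 1, 2]
  simp only [Fin.sum_univ_three, Matrix.cons_val, steinhausMoment_zero, h_one] at hpoly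
  calc √π / 2 * √(∑ k, ‖a k‖ ^ 2)
    _ = √π / 2 * √(1 + ∑ k, ‖b k‖ ^ 2) := by
      rw [Fin.sum_univ_succAbove _ j, ha, one_pow]
      rfl
    _ ≤ 0.945 + 0.338 * ∑ k, ‖b k‖ ^ 2 - 0.013 * (2 * (∑ k, ‖b k‖ ^ 2) ^ 2) :=
      sqrt_pi_div_two_mul_sqrt_one_add_le (by positivity) hrest
    _ ≤ ∫ t, (0.945 * (‖steinhausSum b t‖ ^ 2) ^ 0 + 0.338 * (‖steinhausSum b t‖ ^ 2) ^ 1 +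
          -0.013 * (‖steinhausSum b t‖ ^ 2) ^ 2) ∂anglesMeasure (Fin N) := by
      rw [hpoly]
      norm_num at h_two ⊢
      linarith
    _ ≤ ∫ t, ∫ θ, ‖a j * Circle.exp θ + steinhausSum b t‖ ∂angleMeasure ∂anglesMeasure (Fin N) := by
      refine integral_mono (integrable_comp_steinhausSum b (F := fun z ↦ 0.945 * (‖z‖ ^ 2) ^ 0 +
        0.338 * (‖z‖ ^ 2) ^ 1 + -0.013 * (‖z‖ ^ 2) ^ 2) (by fun_prop))
        (integrable_comp_add_steinhausSum_succAbove j a continuous_norm).integral_prod_right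
        fun t ↦ ?_
      refine le_trans (le_of_eq ?_) (le_integral_norm_mul_circleExp_add ha (steinhausSum b t))
      ring
    _ = _ := (integral_comp_steinhausSum_succAbove j a continuous_norm).symm

lemma le_integral_norm_steinhausSum_of_sum_sq_le {N : ℕ} {a : Fin N → ℂ} {j : Fin N}
    (hj : a j ≠ 0) (ha : ∑ k, ‖a k‖ ^ 2 ≤ 2 * ‖a j‖ ^ 2) :
    √π / 2 * √(∑ k, ‖a k‖ ^ 2) ≤ ∫ θ, ‖steinhausSum a θ‖ ∂anglesMeasure (Fin N) := by
  obtain ⟨c, hc⟩ : ∃ c, c = ‖a j‖ := ⟨_, rfl⟩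
  have hc0 : 0 < c := hc ▸ norm_pos_iff.2 hj
  obtain ⟨b, rfl⟩ : ∃ b : Fin N → ℂ, a = (c : ℂ) • b :=
    ⟨(c : ℂ)⁻¹ • a, (smul_inv_smul₀ (by exact_mod_cast hc0.ne') a).symm⟩
  have hnorm (k : Fin N) : ‖((c : ℂ) • b) k‖ = c * ‖b k‖ := by
    rw [Pi.smul_apply, norm_smul, Complex.norm_of_nonneg hc0.le]
  have hbj : ‖b j‖ = 1 := by
    rw [hnorm] at hc
    exact (mul_eq_left₀ hc0.ne').1 hc.symm
  simp only [hnorm, hbj, mul_pow, ← Finset.mul_sum, steinhausSum_smul, norm_mul,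
    Complex.norm_of_nonneg hc0.le, integral_const_mul, mul_one] at ha ⊢
  rw [sqrt_mul (sq_nonneg c), sqrt_sq hc0.le, mul_left_comm]
  gcongr
  cases N with
  | zero => exact j.elim0
  | succ N =>
    refine le_integral_norm_steinhausSum_of_norm_eq_one j hbj ?_
    rw [Fin.sum_univ_succAbove _ j, hbj] at ha
    nlinarith [sq_pos_of_pos hc0]

end DominantCoefficient

section DefectIntegral

/-- The functional `φ ↦ ∫₀^∞ (1 - φ t) / t² dt`. It sends `t ↦ cos (t * x)` to `π / 2 * |x|`, hence
turns characteristic functions into first absolute moments. -/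
noncomputable def defectIntegral (φ : ℝ → ℝ) : ℝ := ∫ t in Ioi 0, (1 - φ t) / t ^ 2

variable {φ ψ : ℝ → ℝ} {C c R : ℝ}

lemma abs_one_sub_div_sq_le (h : ∀ t, |1 - φ t| ≤ C * min 1 (t ^ 2)) (t : ℝ) :
    |(1 - φ t) / t ^ 2| ≤ 2 * C * (1 + t ^ 2)⁻¹ := by
  have hC : 0 ≤ C := by simpa using (abs_nonneg _).trans (h 1)
  rcases eq_or_ne t 0 with rfl | ht
  · simpa using hC
  have hmin : (1 + t ^ 2) * min 1 (t ^ 2) ≤ 2 * t ^ 2 := by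
    rcases min_cases 1 (t ^ 2) with h | h <;> rw [h.1] <;> nlinarith [sq_nonneg t]
  rw [abs_div, abs_of_nonneg (sq_nonneg t), ← div_eq_mul_inv,
    div_le_div_iff₀ (by positivity) (by positivity)]
  calc |1 - φ t| * (1 + t ^ 2)
    _ ≤ C * min 1 (t ^ 2) * (1 + t ^ 2) := by gcongr; exact h t
    _ = C * ((1 + t ^ 2) * min 1 (t ^ 2)) := by ring
    _ ≤ C * (2 * t ^ 2) := by gcongr
    _ = 2 * C * t ^ 2 := by ring

lemma integrableOn_one_sub_div_sq (hφ : Measurable φ) (h : ∀ t, |1 - φ t| ≤ C * min 1 (t ^ 2)) :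
    IntegrableOn (fun t ↦ (1 - φ t) / t ^ 2) (Ioi 0) :=
  (integrable_inv_one_add_sq.const_mul (2 * C)).integrableOn.mono'
    (by fun_prop : Measurable _).aestronglyMeasurable (.of_forall (abs_one_sub_div_sq_le h))

lemma abs_one_sub_comp_mul_le (h : ∀ t, |1 - φ t| ≤ C * min 1 (t ^ 2)) (hR : 1 ≤ R) (hc : |c| ≤ R)
    (t : ℝ) : |1 - φ (t * c)| ≤ C * R ^ 2 * min 1 (t ^ 2) := by
  have hC : 0 ≤ C := by simpa using (abs_nonneg _).trans (h 1)
  have hcR : c ^ 2 ≤ R ^ 2 := sq_le_sq.2 (hc.trans (le_abs_self R))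
  rw [mul_assoc]
  refine (h _).trans (mul_le_mul_of_nonneg_left ?_ hC)
  rw [mul_min_of_nonneg _ _ (sq_nonneg R), mul_one, mul_pow, mul_comm]
  gcongr
  exact one_le_pow₀ hR

lemma defectIntegral_comp_mul (h0 : φ 0 = 1) (hc : 0 ≤ c) :
    defectIntegral (fun t ↦ φ (t * c)) = c * defectIntegral φ := by
  rcases hc.eq_or_lt with rfl | hc
  · simp [defectIntegral, h0]
  have hscale (t : ℝ) : (1 - φ (t * c)) / t ^ 2 = c ^ 2 * ((1 - φ (t * c)) / (t * c) ^ 2) := by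
    field_simp
  have hsubst := integral_comp_mul_right_Ioi (fun t ↦ (1 - φ t) / t ^ 2) 0 hc
  rw [zero_mul, smul_eq_mul] at hsubst
  simp only [defectIntegral, hscale]
  rw [integral_const_mul, hsubst]
  field_simp

lemma defectIntegral_anti (hφ : Measurable φ) (hφC : ∀ t, |1 - φ t| ≤ C * min 1 (t ^ 2))
    (hψ : Measurable ψ) (hψC : ∀ t, |1 - ψ t| ≤ c * min 1 (t ^ 2)) (h : ∀ t > 0, φ t ≤ ψ t) :
    defectIntegral ψ ≤ defectIntegral φ :=
  setIntegral_mono_on (integrableOn_one_sub_div_sq hψ hψC) (integrableOn_one_sub_div_sq hφ hφC)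
    measurableSet_Ioi fun t ht ↦ by gcongr; exact h t ht

lemma abs_one_sub_add_mul_sub_le {χ : ℝ → ℝ} {B b : ℝ}
    (hφ : ∀ t, |1 - φ t| ≤ C * min 1 (t ^ 2)) (hψ : ∀ t, |1 - ψ t| ≤ c * min 1 (t ^ 2))
    (hχ : ∀ t, |1 - χ t| ≤ B * min 1 (t ^ 2)) (t : ℝ) :
    |1 - (φ t + b * (ψ t - χ t))| ≤ (C + |b| * (B + c)) * min 1 (t ^ 2) := by
  calc |1 - (φ t + b * (ψ t - χ t))|
    _ = |1 - φ t - b * ((1 - χ t) - (1 - ψ t))| := by ring_nf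
    _ ≤ |1 - φ t| + |b| * (|1 - χ t| + |1 - ψ t|) := by
      refine (abs_sub _ _).trans ?_
      rw [abs_mul]
      gcongr
      exact abs_sub _ _
    _ ≤ C * min 1 (t ^ 2) + |b| * (B * min 1 (t ^ 2) + c * min 1 (t ^ 2)) := by
      gcongr
      exacts [hφ t, hχ t, hψ t]
    _ = (C + |b| * (B + c)) * min 1 (t ^ 2) := by ring

lemma defectIntegral_add_mul_sub {χ : ℝ → ℝ} {B b : ℝ}
    (hφ : Measurable φ) (hφC : ∀ t, |1 - φ t| ≤ C * min 1 (t ^ 2))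
    (hψ : Measurable ψ) (hψC : ∀ t, |1 - ψ t| ≤ c * min 1 (t ^ 2))
    (hχ : Measurable χ) (hχC : ∀ t, |1 - χ t| ≤ B * min 1 (t ^ 2)) :
    defectIntegral (fun t ↦ φ t + b * (ψ t - χ t)) =
      defectIntegral φ + b * (defectIntegral ψ - defectIntegral χ) := by
  have iφ := integrableOn_one_sub_div_sq hφ hφC
  have iψ := integrableOn_one_sub_div_sq hψ hψC
  have iχ := integrableOn_one_sub_div_sq hχ hχC
  simp only [defectIntegral]
  rw [← integral_sub iψ iχ, ← integral_const_mul, ← integral_add iφ ((iψ.fun_sub iχ).const_mul b)]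
  congr with t
  ring

section Average

variable {α : Type*} [MeasurableSpace α] {μ : Measure α} [IsProbabilityMeasure μ] {F : α → ℝ → ℝ}

lemma integrable_of_abs_one_sub_le (hF : Measurable F.uncurry)
    (h : ∀ x t, |1 - F x t| ≤ C * min 1 (t ^ 2)) (t : ℝ) : Integrable (F · t) μ := by
  have hFt : Measurable (F · t) := hF.comp measurable_prodMk_right
  have : Integrable (fun x ↦ 1 - F x t) μ :=
    .of_bound (by fun_prop) (C * min 1 (t ^ 2)) (.of_forall (h · t))
  simpa [Pi.sub_def] using (integrable_const 1).sub this

lemma abs_one_sub_integral_le (hF : Measurable F.uncurry)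
    (h : ∀ x t, |1 - F x t| ≤ C * min 1 (t ^ 2)) (t : ℝ) :
    |1 - ∫ x, F x t ∂μ| ≤ C * min 1 (t ^ 2) := by
  have hFt := integrable_of_abs_one_sub_le (μ := μ) hF h t
  calc |1 - ∫ x, F x t ∂μ|
    _ = ‖∫ x, (1 - F x t) ∂μ‖ := by
      rw [integral_sub (integrable_const 1) hFt, integral_const]
      simp
    _ ≤ C * min 1 (t ^ 2) := by
      simpa using norm_integral_le_of_norm_le_const (μ := μ) (f := fun x ↦ 1 - F x t)
        (.of_forall (h · t))

lemma defectIntegral_integral (hF : Measurable F.uncurry)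
    (h : ∀ x t, |1 - F x t| ≤ C * min 1 (t ^ 2)) :
    defectIntegral (fun t ↦ ∫ x, F x t ∂μ) = ∫ x, defectIntegral (F x) ∂μ := by
  have hprod : Integrable (fun q : ℝ × α ↦ (1 - F q.2 q.1) / q.1 ^ 2)
      ((volume.restrict (Ioi 0)).prod μ) := by
    have : Measurable fun q : ℝ × α ↦ F q.2 q.1 := hF.comp measurable_swap
    have hbound : Integrable (fun t : ℝ ↦ 2 * C * (1 + t ^ 2)⁻¹) (volume.restrict (Ioi 0)) :=
      (integrable_inv_one_add_sq.const_mul (2 * C)).integrableOn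
    exact (hbound.comp_fst μ).mono' (by fun_prop : Measurable _).aestronglyMeasurable
      (.of_forall fun q ↦ abs_one_sub_div_sq_le (h q.2) q.1)
  calc defectIntegral (fun t ↦ ∫ x, F x t ∂μ)
    _ = ∫ t in Ioi 0, ∫ x, (1 - F x t) / t ^ 2 ∂μ := by
      simp only [defectIntegral, integral_div]
      congr! 3 with t
      rw [integral_sub (integrable_const 1) (integrable_of_abs_one_sub_le hF h t)]
      simp
    _ = ∫ x, defectIntegral (F x) ∂μ := integral_integral_swap hprod

end Average

lemma abs_one_sub_sum_le {ι : Type*} {s : Finset ι} {w : ι → ℝ} {φ : ι → ℝ → ℝ} {C : ι → ℝ}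
    (hw : ∑ i ∈ s, w i = 1) (h : ∀ i ∈ s, ∀ t, |1 - φ i t| ≤ C i * min 1 (t ^ 2)) (t : ℝ) :
    |1 - ∑ i ∈ s, w i * φ i t| ≤ (∑ i ∈ s, |w i| * C i) * min 1 (t ^ 2) := by
  calc |1 - ∑ i ∈ s, w i * φ i t|
    _ = |∑ i ∈ s, w i * (1 - φ i t)| := by
      simp only [mul_sub, mul_one, Finset.sum_sub_distrib, hw]
    _ ≤ ∑ i ∈ s, |w i| * |1 - φ i t| := by
      simpa only [abs_mul] using Finset.abs_sum_le_sum_abs (fun i ↦ w i * (1 - φ i t)) s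
    _ ≤ ∑ i ∈ s, |w i| * (C i * min 1 (t ^ 2)) := by
      gcongr with i hi
      exact h i hi t
    _ = (∑ i ∈ s, |w i| * C i) * min 1 (t ^ 2) := by
      simp only [Finset.sum_mul, mul_assoc]

lemma defectIntegral_sum {ι : Type*} {s : Finset ι} {w : ι → ℝ} {φ : ι → ℝ → ℝ} {C : ι → ℝ}
    (hw : ∑ i ∈ s, w i = 1) (hφ : ∀ i ∈ s, Measurable (φ i))
    (h : ∀ i ∈ s, ∀ t, |1 - φ i t| ≤ C i * min 1 (t ^ 2)) :
    defectIntegral (fun t ↦ ∑ i ∈ s, w i * φ i t) = ∑ i ∈ s, w i * defectIntegral (φ i) := by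
  have hsum (t : ℝ) : (1 - ∑ i ∈ s, w i * φ i t) / t ^ 2 =
      ∑ i ∈ s, w i * ((1 - φ i t) / t ^ 2) := by
    simp only [mul_div_assoc', mul_sub, mul_one, ← Finset.sum_div, Finset.sum_sub_distrib, hw]
  simp only [defectIntegral, hsum, ← integral_const_mul]
  exact integral_finsetSum _ fun i hi ↦
    (integrableOn_one_sub_div_sq (hφ i hi) (h i hi)).const_mul (w i)

lemma abs_one_sub_cos_le (t : ℝ) : |1 - cos t| ≤ 2 * min 1 (t ^ 2) := by
  rw [abs_of_nonneg (by linarith [cos_le_one t]), mul_min_of_nonneg _ _ zero_le_two]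
  exact le_min (by linarith [neg_one_le_cos t])
    (by linarith [one_sub_sq_div_two_le_cos (x := t), sq_nonneg t])

lemma integral_exp_neg_mul_one_sub_cos {x : ℝ} (hx : 0 < x) :
    ∫ t in Ioi 0, x * exp (-(t * x)) * (1 - cos t) = (1 + x ^ 2)⁻¹ := by
  have hre : (-(x : ℂ)).re < 0 := by simpa using hx
  have hre' : (-(x : ℂ) + Complex.I).re < 0 := by simpa using hx
  have hpoint (t : ℝ) : x * exp (-(t * x)) * (1 - cos t) =
      x * (Complex.exp (-x * t) - Complex.exp ((-x + Complex.I) * t)).re := by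
    rw [show -(x : ℂ) * t = ((-(t * x) : ℝ) : ℂ) by push_cast; ring,
      show (-(x : ℂ) + Complex.I) * t = ((-(t * x) : ℝ) : ℂ) + t * Complex.I by push_cast; ring,
      Complex.exp_add, ← Complex.ofReal_exp, Complex.sub_re, Complex.re_ofReal_mul,
      Complex.exp_ofReal_mul_I_re, Complex.ofReal_re]
    ring
  have hi := integrableOn_exp_mul_complex_Ioi hre 0
  have hi' := integrableOn_exp_mul_complex_Ioi hre' 0
  simp only [hpoint, ← RCLike.re_eq_complex_re]
  have hsub := integral_re (hi.sub hi')
  simp only [Pi.sub_apply] at hsub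
  rw [integral_const_mul, hsub, integral_sub hi hi',
    integral_exp_mul_complex_Ioi hre, integral_exp_mul_complex_Ioi hre']
  simp [Complex.div_re, Complex.normSq_apply]
  field_simp
  ring

lemma integral_mul_exp_neg_mul {t : ℝ} (ht : 0 < t) :
    ∫ x in Ioi 0, x * exp (-(t * x)) = (t ^ 2)⁻¹ := by
  have h := integral_rpow_mul_exp_neg_mul_Ioi (a := 2) two_pos ht
  norm_num at h
  exact h

-- Writing `1 / t² = ∫ x * exp (-t * x) dx` turns the integral into that of `1 / (1 + x²)`.
lemma defectIntegral_cos : defectIntegral cos = π / 2 := by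
  have hinner : EqOn (fun t ↦ ∫ x in Ioi 0, x * exp (-(t * x)) * (1 - cos t))
      (fun t ↦ (1 - cos t) / t ^ 2) (Ioi 0) := fun t ht ↦ by
    simp only
    rw [integral_mul_const, integral_mul_exp_neg_mul ht, inv_mul_eq_div]
  have hfub : Integrable (Function.uncurry fun t x : ℝ ↦ x * exp (-(t * x)) * (1 - cos t))
      ((volume.restrict (Ioi 0)).prod (volume.restrict (Ioi 0))) := by
    rw [integrable_prod_iff (by unfold Function.uncurry; fun_prop)]
    refine ⟨ae_restrict_of_forall_mem measurableSet_Ioi fun t ht ↦ ?_, ?_⟩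
    · have hne : ∫ x in Ioi 0, x * exp (-(t * x)) ≠ 0 := by
        rw [integral_mul_exp_neg_mul ht]
        exact (inv_pos.2 (pow_pos ht 2)).ne'
      exact (Integrable.of_integral_ne_zero hne).mul_const (1 - cos t)
    · refine (integrableOn_one_sub_div_sq measurable_cos abs_one_sub_cos_le).congr_fun
        (fun t ht ↦ ?_) measurableSet_Ioi
      refine (hinner ht).symm.trans (setIntegral_congr_fun measurableSet_Ioi fun x hx ↦ ?_)
      exact (norm_of_nonneg <| mul_nonneg (mul_nonneg (le_of_lt hx) (exp_pos _).le)
        (sub_nonneg.2 (cos_le_one t))).symm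
  calc defectIntegral cos
    _ = ∫ t in Ioi 0, ∫ x in Ioi 0, x * exp (-(t * x)) * (1 - cos t) :=
      (setIntegral_congr_fun measurableSet_Ioi hinner).symm
    _ = ∫ x in Ioi 0, ∫ t in Ioi 0, x * exp (-(t * x)) * (1 - cos t) := integral_integral_swap hfub
    _ = ∫ x in Ioi (0 : ℝ), (1 + x ^ 2)⁻¹ := setIntegral_congr_fun measurableSet_Ioi fun x hx ↦
      integral_exp_neg_mul_one_sub_cos hx
    _ = π / 2 := by simp [integral_Ioi_inv_one_add_sq]

lemma defectIntegral_cos_mul (x : ℝ) : defectIntegral (fun t ↦ cos (t * x)) = π / 2 * |x| := by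
  have h := defectIntegral_comp_mul cos_zero (abs_nonneg x)
  rw [defectIntegral_cos, mul_comm] at h
  rw [← h]
  congr! 2 with t
  rw [← cos_abs, ← cos_abs (t * |x|), abs_mul, abs_mul, abs_abs]

lemma abs_one_sub_exp_neg_sq_le (t : ℝ) : |1 - exp (-t ^ 2)| ≤ 1 * min 1 (t ^ 2) := by
  have hle : exp (-t ^ 2) ≤ 1 := exp_le_one_iff.2 (neg_nonpos.2 (sq_nonneg t))
  rw [abs_of_nonneg (sub_nonneg.2 hle), one_mul]
  exact le_min (by linarith [exp_pos (-t ^ 2)]) (by linarith [add_one_le_exp (-t ^ 2)])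

lemma defectIntegral_exp_neg_sq : defectIntegral (fun t ↦ exp (-t ^ 2)) = √π := by
  have hdefect := integrableOn_one_sub_div_sq (φ := fun t ↦ exp (-t ^ 2)) (by fun_prop)
    abs_one_sub_exp_neg_sq_le
  have hgauss : IntegrableOn (fun t ↦ 2 * exp (-1 * t ^ 2)) (Ioi 0) :=
    ((integrable_exp_neg_mul_sq one_pos).const_mul 2).integrableOn
  have hbound (t : ℝ) : ‖-((1 - exp (-t ^ 2)) / t)‖ ≤ min |t|⁻¹ |t| := by
    have h := div_le_div_of_nonneg_right (abs_one_sub_exp_neg_sq_le t) (abs_nonneg t)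
    rwa [one_mul, ← min_div_div_right (abs_nonneg t), one_div, ← sq_abs, sq, mul_self_div_self,
      ← sq, sq_abs, ← abs_div, ← norm_eq_abs, ← norm_neg] at h
  have hparts := integral_Ioi_of_hasDerivAt_of_tendsto (a := 0) (m := 0)
    (f := fun t ↦ -((1 - exp (-t ^ 2)) / t))
    (f' := fun t ↦ (1 - exp (-t ^ 2)) / t ^ 2 - 2 * exp (-1 * t ^ 2)) ?_ ?_ (hdefect.sub hgauss) ?_
  · rw [integral_sub hdefect hgauss, integral_const_mul, integral_gaussian_Ioi] at hparts
    simp only [defectIntegral]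
    norm_num at hparts
    linarith
  · have htendsto : Tendsto (fun t : ℝ ↦ |t|) (𝓝[≥] 0) (𝓝 0) := by
      simpa using (continuous_abs.tendsto (0 : ℝ)).mono_left nhdsWithin_le_nhds
    simpa [ContinuousWithinAt] using
      squeeze_zero_norm (fun t ↦ (hbound t).trans (min_le_right _ _)) htendsto
  · intro t ht
    have hexp : HasDerivAt (fun t ↦ exp (-t ^ 2)) (exp (-t ^ 2) * (-(2 * t))) t := by
      simpa using (hasDerivAt_pow 2 t).neg.exp
    have ht0 : t ≠ 0 := ne_of_gt ht
    exact ((hexp.const_sub 1).div (hasDerivAt_id' t) ht0).neg.congr_deriv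
      (by field_simp; ring)
  · exact squeeze_zero_norm (fun t ↦ (hbound t).trans (min_le_left _ _))
      (tendsto_abs_atTop_atTop.inv_tendsto_atTop)

end DefectIntegral

section Bessel

/-- The Bessel function `J₀`, through Bessel's integral: the characteristic function of the real
part of a uniformly distributed unimodular complex number. -/
noncomputable def besselJ0 (u : ℝ) : ℝ := ∫ θ, cos (u * cos θ) ∂angleMeasure

@[fun_prop]
lemma continuous_besselJ0 : Continuous besselJ0 :=
  continuous_of_dominated (bound := fun _ ↦ 1)
    (fun _ ↦ (by fun_prop : Continuous _).aestronglyMeasurable)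
    (fun _ ↦ .of_forall fun _ ↦ abs_cos_le_one _) (integrable_const _)
    (.of_forall fun _ ↦ by fun_prop)

lemma besselJ0_zero : besselJ0 0 = 1 := by simp [besselJ0]

lemma abs_besselJ0_le_one (u : ℝ) : |besselJ0 u| ≤ 1 := by
  simpa [besselJ0] using norm_integral_le_of_norm_le_const (μ := angleMeasure)
    (f := fun θ ↦ cos (u * cos θ)) (.of_forall fun _ ↦ abs_cos_le_one _)

lemma abs_one_sub_cos_mul_cos_le (θ t : ℝ) : |1 - cos (t * cos θ)| ≤ 2 * min 1 (t ^ 2) := by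
  simpa using abs_one_sub_comp_mul_le abs_one_sub_cos_le le_rfl (abs_cos_le_one θ) t

lemma abs_one_sub_besselJ0_le (t : ℝ) : |1 - besselJ0 t| ≤ 2 * min 1 (t ^ 2) :=
  abs_one_sub_integral_le (F := fun θ t ↦ cos (t * cos θ)) (by unfold Function.uncurry; fun_prop)
    abs_one_sub_cos_mul_cos_le t

lemma integral_cos_re_mul_circleExp (z : ℂ) :
    ∫ θ, cos (z * Circle.exp θ).re ∂angleMeasure = besselJ0 ‖z‖ :=
  integral_comp_re_mul_circleExp cos z

lemma integral_sin_re_mul_circleExp (z : ℂ) :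
    ∫ θ, sin (z * Circle.exp θ).re ∂angleMeasure = 0 := by
  have hodd := integral_comp_neg_cos fun x ↦ sin (‖z‖ * x)
  simp only [mul_neg, sin_neg, integral_neg] at hodd
  rw [integral_comp_re_mul_circleExp sin z]
  linarith

lemma integral_besselJ0_norm_mul_circleExp_add (a x : ℂ) :
    ∫ θ, besselJ0 ‖a * Circle.exp θ + x‖ ∂angleMeasure = besselJ0 ‖a‖ * besselJ0 ‖x‖ := by
  have hexpand (t θ : ℝ) : cos ((a * Circle.exp θ + x) * Circle.exp t).re =
      cos (x * Circle.exp t).re * cos (a * Circle.exp t * Circle.exp θ).re -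
        sin (x * Circle.exp t).re * sin (a * Circle.exp t * Circle.exp θ).re := by
    rw [← cos_add, ← Complex.add_re]
    ring_nf
  have hinner (t : ℝ) : ∫ θ, cos ((a * Circle.exp θ + x) * Circle.exp t).re ∂angleMeasure =
      besselJ0 ‖a‖ * cos (x * Circle.exp t).re := by
    simp only [hexpand]
    rw [integral_sub, integral_const_mul, integral_const_mul, integral_cos_re_mul_circleExp,
      integral_sin_re_mul_circleExp, norm_mul, Circle.norm_coe, mul_one, mul_zero, sub_zero,
      mul_comm] <;> exact integrable_angleMeasure (by fun_prop)
  have hprod : Integrable (Function.uncurry fun θ t : ℝ ↦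
      cos ((a * Circle.exp θ + x) * Circle.exp t).re) (angleMeasure.prod angleMeasure) := by
    refine .of_bound (Continuous.aestronglyMeasurable ?_) 1 (.of_forall fun _ ↦ abs_cos_le_one _)
    unfold Function.uncurry
    fun_prop
  simp only [← integral_cos_re_mul_circleExp]
  rw [integral_integral_swap hprod]
  simp only [hinner]
  rw [integral_const_mul, integral_cos_re_mul_circleExp, integral_cos_re_mul_circleExp]

lemma integral_besselJ0_norm_steinhausSum {N : ℕ} (a : Fin N → ℂ) :
    ∫ θ, besselJ0 ‖steinhausSum a θ‖ ∂anglesMeasure (Fin N) = ∏ j, besselJ0 ‖a j‖ := by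
  induction N with
  | zero => simp [steinhausSum, besselJ0_zero]
  | succ N ih =>
    rw [integral_comp_steinhausSum_succAbove 0 a (F := fun x ↦ besselJ0 ‖x‖) (by fun_prop)]
    simp only [integral_besselJ0_norm_mul_circleExp_add]
    rw [integral_const_mul, ih, Fin.prod_univ_succAbove _ 0]
    rfl

lemma integral_abs_cos : ∫ θ, |cos θ| ∂angleMeasure = 2 / π := by
  have hper : Function.Periodic (fun θ ↦ |cos θ|) π := fun θ ↦ by simp
  have habs : ∀ θ ∈ uIcc (-(π / 2)) (π / 2), |cos θ| = cos θ := fun θ hθ ↦ by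
    rw [uIcc_of_le (by linarith [pi_pos])] at hθ
    exact abs_of_nonneg (cos_nonneg_of_mem_Icc hθ)
  have htwice := hper.intervalIntegral_add_zsmul_eq 2 0
    (fun _ _ ↦ (by fun_prop : Continuous _).intervalIntegrable _ _)
  have hshift := hper.intervalIntegral_add_eq 0 (-(π / 2))
  rw [show -(π / 2) + π = π / 2 by ring, intervalIntegral.integral_congr habs, integral_cos,
    sin_neg, sin_pi_div_two, zero_add] at hshift
  norm_num [hshift] at htwice
  rw [integral_angleMeasure, htwice]
  field_simp
  norm_num

lemma defectIntegral_besselJ0 : defectIntegral besselJ0 = 1 := by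
  unfold besselJ0
  rw [defectIntegral_integral (F := fun θ t ↦ cos (t * cos θ))
    (by unfold Function.uncurry; fun_prop) abs_one_sub_cos_mul_cos_le]
  simp only [defectIntegral_cos_mul]
  rw [integral_const_mul, integral_abs_cos]
  field_simp

variable {N : ℕ} (a : Fin N → ℂ)

lemma integral_besselJ0_mul_norm_steinhausSum (t : ℝ) :
    ∫ θ, besselJ0 (t * ‖steinhausSum a θ‖) ∂anglesMeasure (Fin N) =
      ∏ j, besselJ0 (t * ‖a j‖) := by
  have heven (c : ℝ) (z : ℂ) : besselJ0 (c * ‖z‖) = besselJ0 ‖(c : ℂ) * z‖ := by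
    simp only [besselJ0, norm_mul, Complex.norm_real, norm_eq_abs]
    rcases abs_cases c with h | h <;> simp [h.1]
  simp only [heven, ← steinhausSum_smul, integral_besselJ0_norm_steinhausSum, Pi.smul_apply,
    smul_eq_mul]

lemma abs_one_sub_besselJ0_mul_norm_steinhausSum_le (θ : Fin N → ℝ) (t : ℝ) :
    |1 - besselJ0 (t * ‖steinhausSum a θ‖)| ≤ 2 * (1 + ∑ j, ‖a j‖) ^ 2 * min 1 (t ^ 2) :=
  abs_one_sub_comp_mul_le abs_one_sub_besselJ0_le
    (le_add_of_nonneg_right (Finset.sum_nonneg fun _ _ ↦ norm_nonneg _))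
    (by rw [abs_norm]; exact (norm_steinhausSum_le a θ).trans (le_add_of_nonneg_left zero_le_one)) t

lemma measurable_uncurry_besselJ0_mul_norm_steinhausSum :
    Measurable (Function.uncurry fun (θ : Fin N → ℝ) t ↦ besselJ0 (t * ‖steinhausSum a θ‖)) := by
  have := continuous_steinhausSum a
  unfold Function.uncurry
  fun_prop

lemma abs_one_sub_prod_besselJ0_le (t : ℝ) :
    |1 - ∏ j, besselJ0 (t * ‖a j‖)| ≤ 2 * (1 + ∑ j, ‖a j‖) ^ 2 * min 1 (t ^ 2) := by
  rw [← integral_besselJ0_mul_norm_steinhausSum]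
  exact abs_one_sub_integral_le (measurable_uncurry_besselJ0_mul_norm_steinhausSum a)
    (abs_one_sub_besselJ0_mul_norm_steinhausSum_le a) t

theorem integral_norm_steinhausSum_eq_defectIntegral :
    ∫ θ, ‖steinhausSum a θ‖ ∂anglesMeasure (Fin N) =
      defectIntegral fun t ↦ ∏ j, besselJ0 (t * ‖a j‖) := by
  simp only [← integral_besselJ0_mul_norm_steinhausSum]
  rw [defectIntegral_integral (measurable_uncurry_besselJ0_mul_norm_steinhausSum a)
    (abs_one_sub_besselJ0_mul_norm_steinhausSum_le a)]
  simp only [defectIntegral_comp_mul besselJ0_zero (norm_nonneg _), defectIntegral_besselJ0,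
    mul_one]

lemma defectIntegral_besselJ0_sq : defectIntegral (fun t ↦ besselJ0 t ^ 2) = 4 / π := by
  have hnorm (t : Fin 1 → ℝ) : ‖steinhausSum (fun _ ↦ 1) t‖ = 1 := by simp [steinhausSum]
  have hsqrt (θ : ℝ) : √(1 ^ 2 + 1 ^ 2 + 2 * (1 * 1 * cos θ)) = √2 * √(1 + cos θ) := by
    rw [← sqrt_mul zero_le_two]
    ring_nf
  have hpair (t : Fin 1 → ℝ) :
      ∫ θ, ‖1 * Circle.exp θ + steinhausSum (fun _ ↦ 1) t‖ ∂angleMeasure = 4 / π := by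
    have hneg := integral_comp_neg_cos fun x ↦ √(1 + x)
    simp only [← sub_eq_add_neg, integral_sqrt_one_sub_cos] at hneg
    rw [integral_norm_mul_circleExp_add, hnorm, norm_one]
    simp only [hsqrt]
    rw [integral_const_mul, ← hneg, mul_div_assoc', mul_left_comm, mul_self_sqrt zero_le_two]
    norm_num
  have htwo := integral_norm_steinhausSum_eq_defectIntegral fun _ : Fin 2 ↦ 1
  simp only [norm_one, mul_one, Finset.prod_const, Finset.card_univ, Fintype.card_fin] at htwo
  rw [← htwo, integral_comp_steinhausSum_succAbove 0 _ continuous_norm]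
  exact (integral_congr_ae (.of_forall hpair)).trans (by simp)

end Bessel

section BesselBounds

/-- The Bessel function `J₁`, through an integral over the circle; it is the negative of the
derivative of `J₀`. -/
noncomputable def besselJ1 (u : ℝ) : ℝ := ∫ θ, cos θ * sin (u * cos θ) ∂angleMeasure

lemma abs_cos_mul_sin_le_one (u θ : ℝ) : |cos θ * sin (u * cos θ)| ≤ 1 := by
  rw [abs_mul]
  exact mul_le_one₀ (abs_cos_le_one _) (abs_nonneg _) (abs_sin_le_one _)

@[fun_prop]
lemma continuous_besselJ1 : Continuous besselJ1 :=
  continuous_of_dominated (bound := fun _ ↦ 1)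
    (fun _ ↦ (by fun_prop : Continuous _).aestronglyMeasurable)
    (fun u ↦ .of_forall (abs_cos_mul_sin_le_one u)) (integrable_const _)
    (.of_forall fun _ ↦ by fun_prop)

lemma hasDerivAt_integral_angleMeasure {F F' : ℝ → ℝ → ℝ} {C : ℝ} (hF : ∀ u, Continuous (F u))
    (hF' : ∀ u, Continuous (F' u)) (hderiv : ∀ u θ, HasDerivAt (F · θ) (F' u θ) u)
    (hbound : ∀ u θ, |F' u θ| ≤ C) (u : ℝ) :
    HasDerivAt (fun u ↦ ∫ θ, F u θ ∂angleMeasure) (∫ θ, F' u θ ∂angleMeasure) u :=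
  (hasDerivAt_integral_of_dominated_loc_of_deriv_le (bound := fun _ ↦ C) univ_mem
    (.of_forall fun v ↦ (hF v).aestronglyMeasurable) (integrable_angleMeasure (hF u))
    (hF' u).aestronglyMeasurable (.of_forall fun θ v _ ↦ hbound v θ) (integrable_const _)
    (.of_forall fun θ v _ ↦ hderiv v θ)).2

lemma hasDerivAt_besselJ0 (u : ℝ) : HasDerivAt besselJ0 (-besselJ1 u) u := by
  rw [besselJ1, ← integral_neg]
  refine hasDerivAt_integral_angleMeasure (F := fun u θ ↦ cos (u * cos θ))
    (F' := fun u θ ↦ -(cos θ * sin (u * cos θ))) (C := 1)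
    (by fun_prop) (by fun_prop) (fun v θ ↦ ?_) (fun v θ ↦ ?_) u
  · exact ((hasDerivAt_mul_const (cos θ)).cos).congr_deriv (by ring)
  · rw [abs_neg]
    exact abs_cos_mul_sin_le_one v θ

lemma mul_integral_cos_sq_mul_cos (u : ℝ) :
    u * ∫ θ, cos θ ^ 2 * cos (u * cos θ) ∂angleMeasure = u * besselJ0 u - besselJ1 u := by
  have hderiv (θ : ℝ) : HasDerivAt (fun θ ↦ sin θ * sin (u * cos θ))
      (cos θ * sin (u * cos θ) - u * cos (u * cos θ) + u * (cos θ ^ 2 * cos (u * cos θ))) θ :=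
    ((hasDerivAt_sin θ).mul (((hasDerivAt_cos θ).const_mul u).sin)).congr_deriv
      (by linear_combination -u * cos (u * cos θ) * sin_sq θ)
  have hzero : ∫ θ, (cos θ * sin (u * cos θ) - u * cos (u * cos θ) +
      u * (cos θ ^ 2 * cos (u * cos θ))) ∂angleMeasure = 0 := by
    rw [integral_angleMeasure, intervalIntegral.integral_eq_sub_of_hasDerivAt (fun θ _ ↦ hderiv θ)
      ((by fun_prop : Continuous _).intervalIntegrable _ _)]
    simp
  rw [integral_add, integral_sub, integral_const_mul, integral_const_mul, ← besselJ0,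
    ← besselJ1] at hzero
  · linarith
  all_goals exact integrable_angleMeasure (by fun_prop)

lemma hasDerivAt_besselJ1 {u : ℝ} (hu : u ≠ 0) :
    HasDerivAt besselJ1 (besselJ0 u - besselJ1 u / u) u := by
  have hode : besselJ0 u - besselJ1 u / u = ∫ θ, cos θ ^ 2 * cos (u * cos θ) ∂angleMeasure := by
    rw [← mul_right_inj' hu, mul_integral_cos_sq_mul_cos, mul_sub, mul_div_cancel₀ _ hu]
  rw [hode]
  refine hasDerivAt_integral_angleMeasure (F := fun u θ ↦ cos θ * sin (u * cos θ))
    (F' := fun u θ ↦ cos θ ^ 2 * cos (u * cos θ)) (C := 1)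
    (by fun_prop) (by fun_prop) (fun v θ ↦ ?_) (fun v θ ↦ ?_) u
  · exact (((hasDerivAt_mul_const (cos θ)).sin).const_mul (cos θ)).congr_deriv (by ring)
  · rw [abs_mul, abs_pow]
    exact mul_le_one₀ (pow_le_one₀ (abs_nonneg _) (abs_cos_le_one _)) (abs_nonneg _)
      (abs_cos_le_one _)

lemma hasDerivAt_mul_besselJ1 {u : ℝ} (hu : u ≠ 0) :
    HasDerivAt (fun u ↦ u * besselJ1 u) (u * besselJ0 u) u :=
  ((hasDerivAt_id' u).mul (hasDerivAt_besselJ1 hu)).congr_deriv (by field_simp; ring)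

/-- The `n`-th partial sum of the power series of `J₀`. -/
noncomputable def besselJ0Sum (n : ℕ) (u : ℝ) : ℝ :=
  ∑ k ∈ Finset.range n, (-1) ^ k * (u / 2) ^ (2 * k) / (k.factorial : ℝ) ^ 2

/-- The `n`-th partial sum of the power series of `J₁`. -/
noncomputable def besselJ1Sum (n : ℕ) (u : ℝ) : ℝ :=
  ∑ k ∈ Finset.range n, (-1) ^ k * (u / 2) ^ (2 * k + 1) / (k.factorial * (k + 1).factorial)

-- The partial sums satisfy the same relations as the functions, `d J₀ = -J₁ du` and
-- `d (u J₁) = u J₀ du`, so integrating an error estimate alternately along the two relations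
-- yields the next one.
lemma hasDerivAt_besselJ0Sum_succ (n : ℕ) (u : ℝ) :
    HasDerivAt (besselJ0Sum (n + 1)) (-besselJ1Sum n u) u := by
  have hterm (k : ℕ) : HasDerivAt
      (fun u : ℝ ↦ (-1) ^ (k + 1) * (u / 2) ^ (2 * (k + 1)) / ((k + 1).factorial : ℝ) ^ 2)
      (-((-1) ^ k * (u / 2) ^ (2 * k + 1) / (k.factorial * (k + 1).factorial))) u := by
    refine (((((hasDerivAt_id' u).div_const 2).fun_pow (2 * (k + 1))).const_mul _).div_const
      _).congr_deriv ?_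
    rw [show 2 * (k + 1) - 1 = 2 * k + 1 by omega, Nat.factorial_succ]
    push_cast
    field_simp
    ring
  rw [besselJ1Sum, ← Finset.sum_neg_distrib]
  unfold besselJ0Sum
  simp only [Finset.sum_range_succ', mul_zero, pow_zero]
  exact (HasDerivAt.fun_sum fun k _ ↦ hterm k).add_const _

lemma hasDerivAt_mul_besselJ1Sum (n : ℕ) (u : ℝ) :
    HasDerivAt (fun u ↦ u * besselJ1Sum n u) (u * besselJ0Sum n u) u := by
  have hterm (k : ℕ) : HasDerivAt
      (fun u : ℝ ↦ u * ((-1) ^ k * (u / 2) ^ (2 * k + 1) / (k.factorial * (k + 1).factorial)))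
      (u * ((-1) ^ k * (u / 2) ^ (2 * k) / (k.factorial : ℝ) ^ 2)) u := by
    refine ((hasDerivAt_id' u).fun_mul (((((hasDerivAt_id' u).div_const 2).fun_pow
      (2 * k + 1)).const_mul _).div_const _)).congr_deriv ?_
    rw [Nat.add_sub_cancel, Nat.factorial_succ]
    push_cast
    field_simp
    ring
  simp only [besselJ1Sum, besselJ0Sum, Finset.mul_sum]
  exact HasDerivAt.fun_sum fun k _ ↦ hterm k

lemma nonneg_of_hasDerivAt_nonneg {f f' : ℝ → ℝ} (hf : Continuous f) (h0 : 0 ≤ f 0)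
    (hderiv : ∀ x > 0, HasDerivAt f (f' x) x) (hf' : ∀ x > 0, 0 ≤ f' x) {x : ℝ} (hx : 0 ≤ x) :
    0 ≤ f x := by
  refine h0.trans (monotoneOn_of_hasDerivWithinAt_nonneg (convex_Ici 0) hf.continuousOn
    (fun y hy ↦ (hderiv y ?_).hasDerivWithinAt) (fun y hy ↦ hf' y ?_) self_mem_Ici hx hx) <;>
  simpa using hy

lemma alternating_besselJ1 {n : ℕ} (h : ∀ u, 0 ≤ u → 0 ≤ (-1) ^ n * (besselJ0 u - besselJ0Sum n u))
    {u : ℝ} (hu : 0 ≤ u) : 0 ≤ (-1) ^ n * (besselJ1 u - besselJ1Sum n u) := by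
  rcases hu.eq_or_lt with rfl | hu
  · simp [besselJ1, besselJ1Sum]
  have hcont : Continuous (besselJ1Sum n) := by unfold besselJ1Sum; fun_prop
  have hmul : 0 ≤ (-1) ^ n * (u * besselJ1 u - u * besselJ1Sum n u) := by
    refine nonneg_of_hasDerivAt_nonneg
      (f := fun u ↦ (-1) ^ n * (u * besselJ1 u - u * besselJ1Sum n u))
      (by fun_prop) (by simp) (fun x hx ↦ ((hasDerivAt_mul_besselJ1 hx.ne').fun_sub
        (hasDerivAt_mul_besselJ1Sum n x)).const_mul _) (fun x hx ↦ ?_) hu.le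
    rw [← mul_sub, mul_left_comm]
    exact mul_nonneg hx.le (h x hx.le)
  rw [← mul_sub, mul_left_comm] at hmul
  exact nonneg_of_mul_nonneg_right hmul hu

theorem alternating_besselJ0 {n : ℕ} (hn : n ≠ 0) {u : ℝ} (hu : 0 ≤ u) :
    0 ≤ (-1) ^ n * (besselJ0 u - besselJ0Sum n u) := by
  induction n, Nat.one_le_iff_ne_zero.2 hn using Nat.le_induction generalizing u with
  | base => simpa [besselJ0Sum] using le_of_abs_le (abs_besselJ0_le_one u)
  | succ n hn ih =>
    have hcont : Continuous (besselJ0Sum (n + 1)) := by unfold besselJ0Sum; fun_prop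
    refine nonneg_of_hasDerivAt_nonneg
      (f := fun u ↦ (-1) ^ (n + 1) * (besselJ0 u - besselJ0Sum (n + 1) u))
      (f' := fun u ↦ (-1) ^ n * (besselJ1 u - besselJ1Sum n u)) (by fun_prop) ?_
      (fun x _ ↦ ?_) (fun x hx ↦ alternating_besselJ1 (fun u ↦ ih (by omega)) hx.le) hu
    · simp [besselJ0Sum, besselJ0_zero, Finset.sum_range_succ']
    · exact (((hasDerivAt_besselJ0 x).sub (hasDerivAt_besselJ0Sum_succ n x)).const_mul
        _).congr_deriv (by ring)

lemma one_sub_sq_div_four_le_besselJ0 {u : ℝ} (hu : 0 ≤ u) : 1 - u ^ 2 / 4 ≤ besselJ0 u := by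
  have h := alternating_besselJ0 two_ne_zero hu
  norm_num [besselJ0Sum, Finset.sum_range_succ] at h
  linarith

lemma besselJ0_le_one_sub_sq_div_eight_sq {u : ℝ} (hu : 0 ≤ u) :
    besselJ0 u ≤ (1 - u ^ 2 / 8) ^ 2 := by
  have h := alternating_besselJ0 three_ne_zero hu
  norm_num [besselJ0Sum, Finset.sum_range_succ] at h
  linarith

lemma abs_besselJ0_le_exp_of_le_two {u : ℝ} (h0 : 0 ≤ u) (h2 : u ≤ 2) :
    |besselJ0 u| ≤ exp (-(u ^ 2 / 4)) := by
  have hsq : u ^ 2 ≤ 4 := by nlinarith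
  rw [abs_of_nonneg ((sub_nonneg.2 (by linarith)).trans (one_sub_sq_div_four_le_besselJ0 h0))]
  calc besselJ0 u
    _ ≤ (1 - u ^ 2 / 8) ^ 2 := besselJ0_le_one_sub_sq_div_eight_sq h0
    _ ≤ exp (-(u ^ 2 / 8)) ^ 2 := pow_le_pow_left₀ (by linarith) (one_sub_le_exp_neg _) 2
    _ = exp (-(u ^ 2 / 4)) := by
      rw [← exp_nat_mul]
      ring_nf

lemma antitoneOn_besselJ0_sq_add_besselJ1_sq :
    AntitoneOn (fun u ↦ besselJ0 u ^ 2 + besselJ1 u ^ 2) (Ioi 0) := by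
  have hderiv (u : ℝ) (hu : 0 < u) : HasDerivAt (fun u ↦ besselJ0 u ^ 2 + besselJ1 u ^ 2)
      (-(2 * besselJ1 u ^ 2 / u)) u :=
    (((hasDerivAt_besselJ0 u).fun_pow 2).fun_add
      ((hasDerivAt_besselJ1 hu.ne').fun_pow 2)).congr_deriv (by field_simp; ring)
  refine antitoneOn_of_hasDerivWithinAt_nonpos (convex_Ioi 0)
    (fun u hu ↦ (hderiv u hu).continuousAt.continuousWithinAt)
    (fun u hu ↦ (hderiv u (interior_subset hu)).hasDerivWithinAt) fun u hu ↦ ?_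
  have : 0 < u := interior_subset hu
  rw [neg_nonpos]
  positivity

lemma besselJ0_sq_add_besselJ1_sq_le : besselJ0 3.2 ^ 2 + besselJ1 3.2 ^ 2 ≤ 0.4216 ^ 2 := by
  have h0 {n : ℕ} (hn : n ≠ 0) := alternating_besselJ0 hn (u := 3.2) (by norm_num)
  have h1 {n : ℕ} (hn : n ≠ 0) := alternating_besselJ1 (n := n)
    (fun _ ↦ alternating_besselJ0 hn) (u := 3.2) (by norm_num)
  have hJ0_upper := h0 (n := 5) (by simp)
  have hJ0_lower := h0 (n := 6) (by simp)
  have hJ1_lower := h1 (n := 4) (by simp)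
  have hJ1_upper := h1 (n := 5) (by simp)
  norm_num [besselJ0Sum, besselJ1Sum, Finset.sum_range_succ, Nat.factorial]
    at hJ0_upper hJ0_lower hJ1_lower hJ1_upper ⊢
  nlinarith

lemma abs_besselJ0_le_of_le {u : ℝ} (hu : 1.85 ≤ u) : |besselJ0 u| ≤ 0.4216 := by
  rcases le_total 3.2 u with hfar | hmid
  · refine abs_le_of_sq_le_sq ?_ (by norm_num)
    exact (le_add_of_nonneg_right (sq_nonneg _)).trans ((antitoneOn_besselJ0_sq_add_besselJ1_sq
      (by norm_num [mem_Ioi]) (lt_of_lt_of_le (by norm_num) hu) hfar).trans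
      besselJ0_sq_add_besselJ1_sq_le)
  · have hupper := besselJ0_le_one_sub_sq_div_eight_sq (u := u) (by linarith)
    have hlower := alternating_besselJ0 four_ne_zero (u := u) (by linarith)
    norm_num [besselJ0Sum, Finset.sum_range_succ, Nat.factorial] at hlower
    obtain ⟨x, hx⟩ : ∃ x, x = u ^ 2 / 4 := ⟨_, rfl⟩
    have hx1 : 0.855625 ≤ x := by nlinarith
    have hx2 : x ≤ 2.56 := by nlinarith
    have hcubic : -0.4216 ≤ 1 - x + x ^ 2 / 4 - x ^ 3 / 36 := by
      nlinarith [mul_nonneg (sub_nonneg.2 hx1) (sub_nonneg.2 hx2), sq_nonneg (x - 2.56),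
        mul_nonneg (mul_nonneg (sub_nonneg.2 hx1) (sub_nonneg.2 hx2)) (sub_nonneg.2 hx2)]
    have hquadratic : (1 - x / 2) ^ 2 ≤ 0.4216 := by nlinarith
    subst hx
    exact abs_le.2 ⟨by linarith, by linarith⟩

lemma abs_besselJ0_le_exp_of_le {u : ℝ} (hu : 1.85 ≤ u) :
    |besselJ0 u| ≤ exp (-(1.85 ^ 2 / 4)) := by
  have hone := exp_one_lt_d9
  have hquad := quadratic_le_exp_of_nonneg (x := 0.144375) (by norm_num)
  calc |besselJ0 u|
    _ ≤ 0.4216 := abs_besselJ0_le_of_le hu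
    _ ≤ exp 0.144375 / exp 1 := by
      rw [le_div_iff₀ (exp_pos 1)]
      norm_num at hone hquad ⊢
      linarith
    _ = exp (-(1.85 ^ 2 / 4)) := by
      rw [← exp_sub]
      norm_num

end BesselBounds

section GaussianComparison

lemma abs_one_sub_abs_rpow_le {x s : ℝ} (hx : |x| ≤ 1) (hs : 1 ≤ s) :
    |1 - |x| ^ s| ≤ s * |1 - x| := by
  have hbernoulli := one_add_mul_self_le_rpow_one_add (s := |x| - 1)
    (by linarith [abs_nonneg x]) hs
  rw [add_sub_cancel] at hbernoulli
  have hle_one : |x| ^ s ≤ 1 := rpow_le_one (abs_nonneg x) hx (by linarith)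
  have habs : 1 - |x| ≤ |1 - x| := by simpa using abs_sub_abs_le_abs_sub 1 x
  rw [abs_of_nonneg (sub_nonneg.2 hle_one)]
  nlinarith

lemma abs_one_sub_abs_besselJ0_rpow_le {s : ℝ} (hs : 1 ≤ s) (t : ℝ) :
    |1 - |besselJ0 t| ^ s| ≤ s * 2 * min 1 (t ^ 2) := by
  rw [mul_assoc]
  exact (abs_one_sub_abs_rpow_le (abs_besselJ0_le_one t) hs).trans
    (by gcongr; exact abs_one_sub_besselJ0_le t)

lemma abs_one_sub_exp_neg_mul_sq_le {b : ℝ} (hb : 0 ≤ b) (t : ℝ) :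
    |1 - exp (-(b * t ^ 2))| ≤ (1 + b) * min 1 (t ^ 2) := by
  have h := abs_one_sub_comp_mul_le (R := √(1 + b)) (c := √b) abs_one_sub_exp_neg_sq_le
    (by simpa) (by rw [abs_of_nonneg (sqrt_nonneg b)]; gcongr; linarith) t
  rwa [mul_pow, sq_sqrt hb, sq_sqrt (by linarith), one_mul, mul_comm (t ^ 2) b] at h

lemma defectIntegral_exp_neg_mul_sq {b : ℝ} (hb : 0 ≤ b) :
    defectIntegral (fun t ↦ exp (-(b * t ^ 2))) = √(π * b) := by
  have h := defectIntegral_comp_mul (φ := fun t ↦ exp (-t ^ 2)) (by simp) (sqrt_nonneg b)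
  rw [defectIntegral_exp_neg_sq] at h
  simp only [mul_pow, sq_sqrt hb, mul_comm _ b] at h
  rw [h, sqrt_mul pi_pos.le, mul_comm]

/-- An elementary function whose derivative dominates `exp (-(u ^ 2 / 2)) / u ^ 2` beyond `1.85`,
for a bound on the Gaussian part of `truncatedGaussian` that is cut off. -/
noncomputable def gaussianTailPrimitive (u : ℝ) : ℝ :=
  -(exp (-(u ^ 2 / 2)) / (u * (u ^ 2 + 2.2)))

lemma hasDerivAt_gaussianTailPrimitive {u : ℝ} (hu : u ≠ 0) :
    HasDerivAt gaussianTailPrimitive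
      (exp (-(u ^ 2 / 2)) / u ^ 2 * ((u ^ 4 + 5.2 * u ^ 2 + 2.2) / (u ^ 2 + 2.2) ^ 2)) u := by
  have hexp := ((hasDerivAt_pow 2 u).div_const 2).neg.exp
  have hden := (hasDerivAt_id' u).fun_mul ((hasDerivAt_pow 2 u).add_const 2.2)
  refine (hexp.div hden (mul_ne_zero hu (by positivity))).neg.congr_deriv ?_
  norm_num
  field_simp
  ring

lemma tendsto_gaussianTailPrimitive : Tendsto gaussianTailPrimitive atTop (𝓝 0) := by
  refine squeeze_zero_norm' ?_ tendsto_inv_atTop_zero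
  filter_upwards [eventually_ge_atTop 1] with u hu
  rw [gaussianTailPrimitive, norm_neg, norm_of_nonneg (by positivity), inv_eq_one_div]
  gcongr
  · exact exp_le_one_iff.2 (neg_nonpos.2 (by positivity))
  · nlinarith

lemma integral_exp_neg_sq_div_two_div_sq_le :
    ∫ u in Ioi 1.85, exp (-(u ^ 2 / 2)) / u ^ 2 ≤ 0.0195 := by
  have hderiv : ∀ u ∈ Ici 1.85, HasDerivAt gaussianTailPrimitive _ u := fun u hu ↦
    hasDerivAt_gaussianTailPrimitive (lt_of_lt_of_le (by norm_num) (mem_Ici.1 hu)).ne'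
  have hnonneg : ∀ u ∈ Ioi 1.85, 0 ≤ exp (-(u ^ 2 / 2)) / u ^ 2 *
      ((u ^ 4 + 5.2 * u ^ 2 + 2.2) / (u ^ 2 + 2.2) ^ 2) := fun u _ ↦ by positivity
  calc ∫ u in Ioi 1.85, exp (-(u ^ 2 / 2)) / u ^ 2
    _ ≤ ∫ u in Ioi 1.85, exp (-(u ^ 2 / 2)) / u ^ 2 *
        ((u ^ 4 + 5.2 * u ^ 2 + 2.2) / (u ^ 2 + 2.2) ^ 2) := by
      refine integral_mono_of_nonneg (.of_forall fun u ↦ by positivity)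
        (integrableOn_Ioi_deriv_of_nonneg' hderiv hnonneg tendsto_gaussianTailPrimitive)
        (ae_restrict_of_forall_mem measurableSet_Ioi fun u hu ↦ ?_)
      refine le_mul_of_one_le_right (by positivity) ((one_le_div (by positivity)).2 ?_)
      nlinarith [mem_Ioi.1 hu]
    _ = exp (-(1.85 ^ 2 / 2)) / (1.85 * (1.85 ^ 2 + 2.2)) := by
      rw [integral_Ioi_of_hasDerivAt_of_nonneg' hderiv hnonneg tendsto_gaussianTailPrimitive,
        gaussianTailPrimitive, zero_sub, neg_neg]
    _ ≤ 0.0195 := by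
      have hsq := quadratic_le_exp_of_nonneg (x := 0.71125) (by norm_num)
      have hmul := mul_le_mul exp_one_gt_d9.le hsq (by norm_num) (exp_pos 1).le
      rw [← exp_add] at hmul
      rw [div_le_iff₀ (by norm_num), exp_neg, inv_le_comm₀ (exp_pos _) (by norm_num)]
      norm_num at hmul ⊢
      linarith

/-- The Gaussian `exp (-(t ^ 2 / 2))` replaced by `0` beyond `1.85`, for the comparison with
`besselJ0 t ^ 2`: beyond that point only `|besselJ0 t| ≤ exp (-(1.85 ^ 2 / 4))` is used. -/
noncomputable def truncatedGaussian : ℝ → ℝ :=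
  (Iic 1.85).indicator fun t ↦ exp (-(t ^ 2 / 2))

@[fun_prop]
lemma measurable_truncatedGaussian : Measurable truncatedGaussian :=
  Measurable.indicator (by fun_prop) measurableSet_Iic

lemma abs_one_sub_exp_neg_sq_div_two_le (t : ℝ) :
    |1 - exp (-(t ^ 2 / 2))| ≤ 3 / 2 * min 1 (t ^ 2) := by
  have h := abs_one_sub_exp_neg_mul_sq_le (b := 1 / 2) (by norm_num) t
  norm_num [div_eq_inv_mul] at h ⊢
  exact h

lemma abs_one_sub_truncatedGaussian_le (t : ℝ) :
    |1 - truncatedGaussian t| ≤ 3 / 2 * min 1 (t ^ 2) := by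
  by_cases ht : t ∈ Iic 1.85
  · rw [truncatedGaussian, indicator_of_mem ht]
    exact abs_one_sub_exp_neg_sq_div_two_le t
  · rw [truncatedGaussian, indicator_of_notMem ht, min_eq_left (by nlinarith [notMem_Iic.1 ht])]
    norm_num

lemma sqrt_pi_div_two_add_le : √(π / 2) + 0.0195 ≤ 4 / π := by
  have hsqrt : √(π / 2) ≤ 1.25332 :=
    (sqrt_le_left (by norm_num)).2 (by linarith [pi_lt_d6])
  have hdiv : 1.27323 ≤ 4 / π := by
    rw [le_div_iff₀ pi_pos]
    linarith [pi_lt_d6]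
  linarith

lemma defectIntegral_truncatedGaussian_le : defectIntegral truncatedGaussian ≤ 4 / π := by
  have hgauss : defectIntegral (fun t ↦ exp (-(t ^ 2 / 2))) = √(π / 2) := by
    simpa [div_eq_inv_mul, mul_comm] using defectIntegral_exp_neg_mul_sq (b := 2⁻¹) (by norm_num)
  have hdiff : defectIntegral truncatedGaussian - defectIntegral (fun t ↦ exp (-(t ^ 2 / 2))) =
      ∫ t in Ioi 1.85, exp (-(t ^ 2 / 2)) / t ^ 2 := by
    rw [defectIntegral, defectIntegral, ← integral_sub
      (integrableOn_one_sub_div_sq (by fun_prop) abs_one_sub_truncatedGaussian_le)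
      (integrableOn_one_sub_div_sq (by fun_prop) abs_one_sub_exp_neg_sq_div_two_le),
      ← inter_eq_right.2 (Ioi_subset_Ioi (by norm_num : (0 : ℝ) ≤ 1.85)),
      ← setIntegral_indicator measurableSet_Ioi]
    refine integral_congr_ae (.of_forall fun t ↦ ?_)
    by_cases ht : t ≤ 1.85
    · simp [truncatedGaussian, ht]
    · simp [truncatedGaussian, ht, not_le.1 ht, sub_div]
  linarith [integral_exp_neg_sq_div_two_div_sq_le, sqrt_pi_div_two_add_le]

lemma rpow_eq_rpow_sub_two_mul_sq {x s : ℝ} (hx : 0 ≤ x) (hs : 2 ≤ s) :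
    x ^ s = x ^ (s - 2) * x ^ 2 := by
  rw [← rpow_two, ← rpow_add_of_nonneg hx (by linarith) zero_le_two, sub_add_cancel]

lemma rpow_sub_two_mul_sq_sub_sq_le {x y z s : ℝ} (hx : 0 ≤ x) (hxy : x ≤ y) (hz : 0 ≤ z)
    (hzy : z ≤ y) (hs : 2 ≤ s) : z ^ (s - 2) * (y ^ 2 - x ^ 2) ≤ y ^ s - x ^ s := by
  have hzy' : z ^ (s - 2) ≤ y ^ (s - 2) := rpow_le_rpow hz hzy (by linarith)
  have hxy' : x ^ (s - 2) ≤ y ^ (s - 2) := rpow_le_rpow hx hxy (by linarith)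
  rw [rpow_eq_rpow_sub_two_mul_sq hx hs, rpow_eq_rpow_sub_two_mul_sq (hx.trans hxy) hs]
  calc z ^ (s - 2) * (y ^ 2 - x ^ 2)
    _ ≤ y ^ (s - 2) * (y ^ 2 - x ^ 2) := by
      gcongr
      exact sub_nonneg.2 (by gcongr)
    _ = y ^ (s - 2) * y ^ 2 - y ^ (s - 2) * x ^ 2 := mul_sub _ _ _
    _ ≤ y ^ (s - 2) * y ^ 2 - x ^ (s - 2) * x ^ 2 := by gcongr

lemma abs_besselJ0_rpow_le {s t : ℝ} (hs : 2 ≤ s) (ht : 0 < t) :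
    |besselJ0 t| ^ s ≤ exp (-(s / 4 * t ^ 2)) + exp (-(1.85 ^ 2 / 4)) ^ (s - 2) *
      (besselJ0 t ^ 2 - truncatedGaussian t) := by
  have hpow (r : ℝ) : exp (-(t ^ 2 / 4)) ^ r = exp (-(r / 4 * t ^ 2)) := by
    rw [← exp_mul]
    ring_nf
  have hsq : exp (-(t ^ 2 / 4)) ^ 2 = exp (-(t ^ 2 / 2)) := by
    rw [← rpow_two, hpow]
    ring_nf
  rcases le_or_gt t 1.85 with hsmall | hlarge
  · have h := rpow_sub_two_mul_sq_sub_sq_le (abs_nonneg (besselJ0 t))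
      (abs_besselJ0_le_exp_of_le_two ht.le (by linarith)) (exp_pos (-(1.85 ^ 2 / 4))).le
      (by gcongr) hs
    rw [hsq, hpow, sq_abs] at h
    rw [truncatedGaussian, indicator_of_mem (mem_Iic.2 hsmall)]
    linarith
  · rw [truncatedGaussian, indicator_of_notMem (notMem_Iic.2 hlarge), sub_zero]
    calc |besselJ0 t| ^ s
      _ = |besselJ0 t| ^ (s - 2) * besselJ0 t ^ 2 := by
        rw [rpow_eq_rpow_sub_two_mul_sq (abs_nonneg _) hs, sq_abs]
      _ ≤ exp (-(1.85 ^ 2 / 4)) ^ (s - 2) * besselJ0 t ^ 2 := by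
        gcongr
        exact abs_besselJ0_le_exp_of_le hlarge.le
      _ ≤ _ := le_add_of_nonneg_left (exp_pos _).le

-- The gain over the Gaussian at `s` is at least a multiple of the gain at `s = 2`, where both
-- integrals are explicit.
theorem sqrt_pi_mul_div_two_le_defectIntegral {s : ℝ} (hs : 2 ≤ s) :
    √(π * s) / 2 ≤ defectIntegral fun t ↦ |besselJ0 t| ^ s := by
  have hsqrt : √(π * s) / 2 = √(π * (s / 4)) := by
    rw [← mul_div_assoc, sqrt_div (by positivity), show (4 : ℝ) = 2 ^ 2 by norm_num,
      sqrt_sq zero_le_two]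
  have hJ0_sq (t : ℝ) : |1 - besselJ0 t ^ 2| ≤ 2 * 2 * min 1 (t ^ 2) := by
    simpa using abs_one_sub_abs_besselJ0_rpow_le one_le_two t
  have hexp := abs_one_sub_exp_neg_mul_sq_le (b := s / 4) (by positivity)
  have hweight : 0 ≤ exp (-(1.85 ^ 2 / 4)) ^ (s - 2) := by positivity
  calc √(π * s) / 2
    _ = defectIntegral fun t ↦ exp (-(s / 4 * t ^ 2)) := by
      rw [hsqrt, defectIntegral_exp_neg_mul_sq (by positivity)]
    _ ≤ defectIntegral (fun t ↦ exp (-(s / 4 * t ^ 2))) + exp (-(1.85 ^ 2 / 4)) ^ (s - 2) *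
        (defectIntegral (fun t ↦ besselJ0 t ^ 2) - defectIntegral truncatedGaussian) := by
      rw [defectIntegral_besselJ0_sq]
      exact le_add_of_nonneg_right
        (mul_nonneg hweight (sub_nonneg.2 defectIntegral_truncatedGaussian_le))
    _ = defectIntegral fun t ↦ exp (-(s / 4 * t ^ 2)) + exp (-(1.85 ^ 2 / 4)) ^ (s - 2) *
        (besselJ0 t ^ 2 - truncatedGaussian t) :=
      (defectIntegral_add_mul_sub (by fun_prop) hexp (by fun_prop) hJ0_sq (by fun_prop)
        abs_one_sub_truncatedGaussian_le).symm
    _ ≤ defectIntegral fun t ↦ |besselJ0 t| ^ s :=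
      defectIntegral_anti (by fun_prop) (abs_one_sub_abs_besselJ0_rpow_le (by linarith))
        (by fun_prop) (abs_one_sub_add_mul_sub_le hexp hJ0_sq abs_one_sub_truncatedGaussian_le)
        fun t ht ↦ abs_besselJ0_rpow_le hs ht

end GaussianComparison

section KhinchineOne

variable {N : ℕ} {a : Fin N → ℂ}

lemma prod_besselJ0_le_sum (ha : ∑ j, ‖a j‖ ^ 2 = 1) (t : ℝ) :
    ∏ j, besselJ0 (t * ‖a j‖) ≤
      ∑ j, ‖a j‖ ^ 2 * |besselJ0 (t * ‖a j‖)| ^ (‖a j‖ ^ 2)⁻¹ := by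
  calc ∏ j, besselJ0 (t * ‖a j‖)
    _ ≤ ∏ j, |besselJ0 (t * ‖a j‖)| := (le_abs_self _).trans (Finset.abs_prod _ _).le
    _ = ∏ j, (|besselJ0 (t * ‖a j‖)| ^ (‖a j‖ ^ 2)⁻¹) ^ (‖a j‖ ^ 2) := by
      refine Finset.prod_congr rfl fun j _ ↦ ?_
      rcases eq_or_ne (a j) 0 with hj | hj
      · simp [hj, besselJ0_zero]
      · rw [rpow_inv_rpow (abs_nonneg _) (by positivity)]
    _ ≤ _ := geom_mean_le_arith_mean_weighted _ _ _ (fun _ _ ↦ by positivity) ha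
      fun _ _ ↦ by positivity

lemma sqrt_pi_div_two_le_defectIntegral_comp_mul {c : ℝ} (hc : 0 < c) (hc2 : c ^ 2 ≤ 1 / 2) :
    √π / 2 ≤ defectIntegral fun t ↦ |besselJ0 (t * c)| ^ (c ^ 2)⁻¹ := by
  have hexponent : 2 ≤ (c ^ 2)⁻¹ := by
    rw [le_inv_comm₀ two_pos (by positivity)]
    linarith
  rw [defectIntegral_comp_mul (φ := fun t ↦ |besselJ0 t| ^ (c ^ 2)⁻¹) (by simp [besselJ0_zero])
    hc.le]
  calc √π / 2
    _ = c * (√(π * (c ^ 2)⁻¹) / 2) := by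
      rw [sqrt_mul pi_pos.le, sqrt_inv, sqrt_sq hc.le]
      field_simp
    _ ≤ _ := by
      gcongr
      exact sqrt_pi_mul_div_two_le_defectIntegral hexponent

lemma abs_one_sub_abs_besselJ0_mul_rpow_inv_sq_le {c : ℝ} (hc : c ^ 2 ≤ 1) (t : ℝ) :
    |1 - |besselJ0 (t * c)| ^ (c ^ 2)⁻¹| ≤ (c ^ 2)⁻¹ * 2 * 1 ^ 2 * min 1 (t ^ 2) := by
  rcases eq_or_ne c 0 with rfl | hc0
  · simp
  · exact abs_one_sub_comp_mul_le (abs_one_sub_abs_besselJ0_rpow_le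
      ((one_le_inv₀ (by positivity)).2 hc)) le_rfl ((sq_le_one_iff_abs_le_one c).1 hc) t

theorem le_integral_norm_steinhausSum_of_forall_sq_le (ha : ∑ j, ‖a j‖ ^ 2 = 1)
    (hle : ∀ j, ‖a j‖ ^ 2 ≤ 1 / 2) :
    √π / 2 ≤ ∫ θ, ‖steinhausSum a θ‖ ∂anglesMeasure (Fin N) := by
  let φ (j : Fin N) (t : ℝ) : ℝ := |besselJ0 (t * ‖a j‖)| ^ (‖a j‖ ^ 2)⁻¹
  have hφ (j : Fin N) : Measurable (φ j) := by fun_prop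
  have hφ_bound (j : Fin N) := abs_one_sub_abs_besselJ0_mul_rpow_inv_sq_le
    ((hle j).trans (by norm_num))
  have hterm (j : Fin N) : ‖a j‖ ^ 2 * (√π / 2) ≤ ‖a j‖ ^ 2 * defectIntegral (φ j) := by
    rcases eq_or_ne (a j) 0 with hj | hj
    · simp [hj]
    · gcongr
      exact sqrt_pi_div_two_le_defectIntegral_comp_mul (norm_pos_iff.2 hj) (hle j)
  calc √π / 2
    _ = ∑ j, ‖a j‖ ^ 2 * (√π / 2) := by rw [← Finset.sum_mul, ha, one_mul]
    _ ≤ ∑ j, ‖a j‖ ^ 2 * defectIntegral (φ j) := Finset.sum_le_sum fun j _ ↦ hterm j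
    _ = defectIntegral fun t ↦ ∑ j, ‖a j‖ ^ 2 * φ j t :=
      (defectIntegral_sum ha (fun j _ ↦ hφ j) fun j _ ↦ hφ_bound j).symm
    _ ≤ defectIntegral fun t ↦ ∏ j, besselJ0 (t * ‖a j‖) :=
      defectIntegral_anti (by fun_prop) (abs_one_sub_prod_besselJ0_le a) (by fun_prop)
        (abs_one_sub_sum_le ha fun j _ ↦ hφ_bound j) fun t _ ↦ prod_besselJ0_le_sum ha t
    _ = _ := (integral_norm_steinhausSum_eq_defectIntegral a).symm

theorem steinhausKhinchine_one : SteinhausKhinchine 1 (2 / √π) := by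
  refine .of_sum_sq_eq_one one_pos (by positivity) fun N a ha ↦ ?_
  simp only [rpow_one]
  have hbound : √π / 2 ≤ ∫ θ, ‖steinhausSum a θ‖ ∂anglesMeasure (Fin N) := by
    by_cases! h : ∀ j, ‖a j‖ ^ 2 ≤ 1 / 2
    · exact le_integral_norm_steinhausSum_of_forall_sq_le ha h
    · obtain ⟨j, hj⟩ := h
      have hj0 : a j ≠ 0 := by
        rintro h0
        norm_num [h0] at hj
      simpa [ha] using le_integral_norm_steinhausSum_of_sum_sq_le hj0 (by linarith)
  calc 1 = 2 / √π * (√π / 2) := by field_simp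
    _ ≤ 2 / √π * ∫ θ, ‖steinhausSum a θ‖ ∂anglesMeasure (Fin N) := by gcongr

end KhinchineOne

lemma log_seventy_three_div_fifty_four_le : log (73 / 54) ≤ 0.304975 := by
  rw [log_le_iff_le_exp (by norm_num)]
  refine le_trans ?_ (sum_le_exp_of_nonneg (by norm_num) 4)
  norm_num [Finset.sum_range_succ, Nat.factorial]

lemma BHBound_two_div_sqrt_pi_mul_rpow {n : ℕ} (hn : 2 ≤ n) :
    BHBound n (2 / √π * ((n : ℝ) - 1) ^ (0.304975 : ℝ)) :=
  BHBound_of_steinhausKhinchine (by positivity) (by norm_num) steinhausKhinchine_one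
    (fun _ hM ↦ steinhausKhinchine_two_mul_div_add_one log_seventy_three_div_fifty_four_le
      (by omega)) hn

lemma one_le_two_div_sqrt_pi_mul_rpow {n : ℕ} (hn : 2 ≤ n) :
    1 ≤ 2 / √π * ((n : ℝ) - 1) ^ (0.304975 : ℝ) := by
  have hsqrt : √π ≤ 2 := (sqrt_le_left zero_le_two).2 (by linarith [pi_lt_four])
  have hn' : (2 : ℝ) ≤ n := by exact_mod_cast hn
  exact one_le_mul_of_one_le_of_one_le ((one_le_div (by positivity)).2 hsqrt)
    (one_le_rpow (by linarith) (by norm_num))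

theorem stmt1 (n : ℕ) (hn : 2 ≤ n) :
    (∀ N : ℕ, 0 < N →
      ∀ U : ContinuousMultilinearMap ℂ (fun _ : Fin n => (Fin N → ℂ)) ℂ,
        BHcomplex n N U ≤ 2 / Real.sqrt π * ((n : ℝ) - 1) ^ (0.304975 : ℝ) * ‖U‖) ∧
    KcomplexOpt n ≤ 2 / Real.sqrt π * ((n : ℝ) - 1) ^ (0.304975 : ℝ) := by
  have h := BHBound_two_div_sqrt_pi_mul_rpow hn
  exact ⟨fun N _ ↦ h N, KcomplexOpt_le_of_BHBound (one_le_two_div_sqrt_pi_mul_rpow hn) h⟩
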